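/- Let M̃ ⊂ [0,1] be a measurable set of positive Lebesgue measure, and let h be the characteristic function of M̃ × {0} ⊂ ∂Q where Q = (0,1)². Then the infimum inf { ∫_Q |Dw| : w ∈ BV(Q), tr_{∂Q} w = h } is not attained. -/

import Mathlib

noncomputable section
open MeasureTheory Filter Set Topology

/-- The set of test values for the variation of `u` in direction `e` on `Ω`:
numbers `∫_Ω u ∂_e ξ` for scalar test functions `ξ ∈ C¹_c(Ω)` with `|ξ| ≤ 1`. -/
def dirVarSet (Ω : Set (ℝ × ℝ)) (u : ℝ × ℝ → ℝ) (e : ℝ × ℝ) : Set ℝ :=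
  {v | ∃ ξ : ℝ × ℝ → ℝ, ContDiff ℝ 1 ξ ∧ HasCompactSupport ξ ∧ tsupport ξ ⊆ Ω ∧
      (∀ x, |ξ x| ≤ 1) ∧ v = ∫ x in Ω, u x * fderiv ℝ ξ x e}

/-- The variation `∫_Ω |D_e u|` of `u` in direction `e`. -/
def dirVar (Ω : Set (ℝ × ℝ)) (u : ℝ × ℝ → ℝ) (e : ℝ × ℝ) : ℝ :=
  sSup (dirVarSet Ω u e)

/-- Test values for the total variation of `u` on `Ω`: numbers `∫_Ω u div ξ` for
vector fields `ξ ∈ C¹_c(Ω, ℝ²)` with (Euclidean) `|ξ| ≤ 1`. -/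
def varSet (Ω : Set (ℝ × ℝ)) (u : ℝ × ℝ → ℝ) : Set ℝ :=
  {v | ∃ ξ : ℝ × ℝ → ℝ × ℝ, ContDiff ℝ 1 ξ ∧ HasCompactSupport ξ ∧ tsupport ξ ⊆ Ω ∧
      (∀ x, (ξ x).1 ^ 2 + (ξ x).2 ^ 2 ≤ 1) ∧
      v = ∫ x in Ω, (u x * (fderiv ℝ ξ x (1, 0)).1 + u x * (fderiv ℝ ξ x (0, 1)).2)}

/-- The total variation `∫_Ω |Du|`. -/
def totalVar (Ω : Set (ℝ × ℝ)) (u : ℝ × ℝ → ℝ) : ℝ := sSup (varSet Ω u)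

/-- `u` is of bounded variation on `Ω`. -/
def IsBVOn (Ω : Set (ℝ × ℝ)) (u : ℝ × ℝ → ℝ) : Prop :=
  IntegrableOn u Ω volume ∧ BddAbove (varSet Ω u)

/-- The open unit square `Q = (0,1)²`. -/
def unitSquare : Set (ℝ × ℝ) := Ioo (0 : ℝ) 1 ×ˢ Ioo (0 : ℝ) 1

/-- `w` has boundary trace `1_{M̃ × {0}}` on `∂Q`: the horizontal/vertical slices of `w`
converge in `L¹` to the indicator of `M̃` on the bottom side and to `0` on the three
other sides. -/
def HasSquareTraceIndicator (w : ℝ × ℝ → ℝ) (M : Set ℝ) : Prop :=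
  Tendsto (fun t : ℝ => ∫ x in (0:ℝ)..1, |w (x, t) - M.indicator 1 x|) (𝓝[>] (0:ℝ)) (𝓝 0) ∧
  Tendsto (fun t : ℝ => ∫ x in (0:ℝ)..1, |w (x, t)|) (𝓝[<] (1:ℝ)) (𝓝 0) ∧
  Tendsto (fun s : ℝ => ∫ y in (0:ℝ)..1, |w (s, y)|) (𝓝[>] (0:ℝ)) (𝓝 0) ∧
  Tendsto (fun s : ℝ => ∫ y in (0:ℝ)..1, |w (s, y)|) (𝓝[<] (1:ℝ)) (𝓝 0)

/- Let `V` be the total variation of `u`, `H` its variation in the horizontal direction and `h` its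
trace on the bottom side. Testing with the fields `(s ξ(x, y), c φ(x) χ(y))`, `s² + c² ≤ 1`, where
`φ` is close to the sign of `h` and `χ` increases to `1`, gives `H² + (∫ |h|)² ≤ V²` in the limit,
because the trace of `u` on the top vanishes. Hence `V ≥ ∫ |h|`, and equality forces `H = 0`: then
`u` is constant along almost every horizontal line, so it vanishes because its traces on the
vertical sides do, and `∫ |h| = 0`. On the other hand the values `∫ |h| + ε` are reached as in
Gagliardo's extension theorem: write `h = ∑ gₖ` with test functions such that
`∑ ∫ |gₖ| ≤ ∫ |h| + ε` and superpose the layers `gₖ(x) 1_{y < tₖ}` with heights `tₖ` so small that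
`tₖ ∫ |gₖ'|` is negligible. -/

section Integration

variable {X : Type*} [MeasurableSpace X] [TopologicalSpace X] [OpensMeasurableSpace X]
  {μ : Measure X} {f φ : X → ℝ}

lemma integrable_mul_of_hasCompactSupport (hf : Integrable f μ) (hφ : Continuous φ)
    (hc : HasCompactSupport φ) : Integrable (fun x => f x * φ x) μ := by
  obtain ⟨C, hC⟩ := hc.exists_bound_of_continuous hφ
  exact hf.mul_bdd hφ.aestronglyMeasurable (ae_of_all _ hC)

lemma integrableOn_mul_of_isCompact_closure [R1Space X] {A : Set X} (hf : IntegrableOn f A μ)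
    (hA : MeasurableSet A) (hc : IsCompact (closure A)) (hφ : Continuous φ) :
    IntegrableOn (fun x => f x * φ x) A μ :=
  hf.mul_continuousOn_of_subset hφ.continuousOn hA hc subset_closure

end Integration

lemma intervalIntegral_eq_setIntegral_Ioo {a b : ℝ} (hab : a ≤ b) (f : ℝ → ℝ) :
    ∫ x in a..b, f x = ∫ x in Ioo a b, f x := by
  rw [intervalIntegral.integral_of_le hab, integral_Ioc_eq_integral_Ioo]

lemma isCompact_closure_Ioo (a b : ℝ) : IsCompact (closure (Ioo a b)) :=
  (Metric.isBounded_Ioo a b).isCompact_closure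

section TestFunctions

variable {E : Type*} [NormedAddCommGroup E] [NormedSpace ℝ E] {Ω : Set E} {ξ η ψ : E → ℝ}

/-- Scalar test functions on `Ω`: `C¹` functions with compact support in `Ω`. -/
structure IsTestFunction (Ω : Set E) (ξ : E → ℝ) : Prop where
  contDiff : ContDiff ℝ 1 ξ
  hasCompactSupport : HasCompactSupport ξ
  tsupport_subset : tsupport ξ ⊆ Ω

namespace IsTestFunction

lemma of_support_subset {K : Set E} (hξ : ContDiff ℝ 1 ξ) (hK : IsCompact K) (hKΩ : K ⊆ Ω)
    (h : Function.support ξ ⊆ K) : IsTestFunction Ω ξ :=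
  ⟨hξ, .of_support_subset_isCompact hK h, (closure_minimal h hK.isClosed).trans hKΩ⟩

protected lemma zero (Ω : Set E) : IsTestFunction Ω 0 :=
  .of_support_subset contDiff_const isCompact_empty (empty_subset Ω) (by simp)

lemma continuous (hξ : IsTestFunction Ω ξ) : Continuous ξ := hξ.contDiff.continuous

lemma differentiableAt (hξ : IsTestFunction Ω ξ) (z : E) : DifferentiableAt ℝ ξ z :=
  hξ.contDiff.differentiable one_ne_zero z

lemma eq_zero_of_notMem (hξ : IsTestFunction Ω ξ) {z : E} (hz : z ∉ Ω) : ξ z = 0 :=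
  image_eq_zero_of_notMem_tsupport fun h => hz (hξ.tsupport_subset h)

lemma sub (hξ : IsTestFunction Ω ξ) (hη : IsTestFunction Ω η) :
    IsTestFunction Ω (fun z => ξ z - η z) :=
  ⟨hξ.contDiff.sub hη.contDiff, hξ.hasCompactSupport.sub hη.hasCompactSupport,
    (tsupport_sub ξ η).trans (union_subset hξ.tsupport_subset hη.tsupport_subset)⟩

lemma mul_left (hξ : IsTestFunction Ω ξ) (hψ : ContDiff ℝ 1 ψ) :
    IsTestFunction Ω (fun z => ψ z * ξ z) :=
  ⟨hψ.mul hξ.contDiff, hξ.hasCompactSupport.mul_left,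
    tsupport_mul_subset_right.trans hξ.tsupport_subset⟩

lemma comp_left {σ : ℝ → ℝ} (hξ : IsTestFunction Ω ξ) (hσ : ContDiff ℝ 1 σ) (hσ0 : σ 0 = 0) :
    IsTestFunction Ω (fun z => σ (ξ z)) :=
  ⟨hσ.comp hξ.contDiff, hξ.hasCompactSupport.comp_left hσ0,
    (tsupport_comp_subset hσ0 ξ).trans hξ.tsupport_subset⟩

lemma exists_abs_le (hξ : IsTestFunction Ω ξ) : ∃ C, 0 < C ∧ ∀ z, |ξ z| ≤ C := by
  obtain ⟨C, hC⟩ := hξ.hasCompactSupport.exists_bound_of_continuous hξ.continuous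
  exact ⟨max C 1, by positivity, fun z => (hC z).trans (le_max_left _ _)⟩

lemma continuous_fderiv_apply (hξ : IsTestFunction Ω ξ) (e : E) :
    Continuous fun z => fderiv ℝ ξ z e :=
  (hξ.contDiff.continuous_fderiv one_ne_zero).clm_apply continuous_const

lemma continuous_deriv {φ : ℝ → ℝ} {Ω : Set ℝ} (hφ : IsTestFunction Ω φ) : Continuous (deriv φ) :=
  hφ.contDiff.continuous_deriv le_rfl

variable [MeasurableSpace E] [OpensMeasurableSpace E] {μ : Measure E}

lemma integrable [IsFiniteMeasureOnCompacts μ] (hξ : IsTestFunction Ω ξ) : Integrable ξ μ :=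
  hξ.continuous.integrable_of_hasCompactSupport hξ.hasCompactSupport

lemma integrable_mul_fderiv (hξ : IsTestFunction Ω ξ) {f : E → ℝ} (hf : Integrable f μ) (e : E) :
    Integrable (fun z => f z * fderiv ℝ ξ z e) μ :=
  integrable_mul_of_hasCompactSupport hf (hξ.continuous_fderiv_apply e)
    (hξ.hasCompactSupport.fderiv_apply ℝ e)

end IsTestFunction

end TestFunctions

section EdgeCutoff

open Real (smoothTransition)

/-- Smooth approximate identity at the endpoint `0` of `(0, 1)`: a nonnegative kernel of unit mass
supported in `[1/(n+4), 2/(n+4)]`. The shift by `4` makes `edgeKernel n` and `edgeCutoff n` test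
functions on `(0, 1)` for every `n`. -/
def edgeKernel (n : ℕ) (x : ℝ) : ℝ := (n + 4) * deriv smoothTransition ((n + 4) * x - 1)

/-- Smooth cutoff on `(0, 1)`, supported in `[1/(n+4), 1 - 1/(n+4)]` and increasing to `1`; its
derivative is `edgeKernel n` near `0` and minus the reflected kernel near `1`. -/
def edgeCutoff (n : ℕ) (x : ℝ) : ℝ :=
  smoothTransition ((n + 4) * x - 1) + smoothTransition ((n + 4) * (1 - x) - 1) - 1

variable {n : ℕ} {x : ℝ}

lemma contDiff_edgeKernel (n : ℕ) : ContDiff ℝ 1 (edgeKernel n) := by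
  have h : ContDiff ℝ (1 + 1) smoothTransition := Real.smoothTransition.contDiff (n := 2)
  exact contDiff_const.mul ((contDiff_succ_iff_deriv.1 h).2.2.comp (by fun_prop))

lemma contDiff_edgeCutoff (n : ℕ) : ContDiff ℝ 1 (edgeCutoff n) := by
  have h : ContDiff ℝ 1 smoothTransition := Real.smoothTransition.contDiff (n := 1)
  exact ((h.comp (by fun_prop)).add (h.comp (by fun_prop))).sub contDiff_const

lemma hasDerivAt_smoothTransition_edge (n : ℕ) (x : ℝ) :
    HasDerivAt (fun y : ℝ => smoothTransition ((n + 4) * y - 1)) (edgeKernel n x) x := by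
  have hT : Differentiable ℝ smoothTransition :=
    (Real.smoothTransition.contDiff (n := 1)).differentiable one_ne_zero
  have haff : HasDerivAt (fun y : ℝ => ((n : ℝ) + 4) * y - 1) (n + 4) x := by
    simpa using ((hasDerivAt_id x).const_mul ((n : ℝ) + 4)).sub_const 1
  exact ((hT _).hasDerivAt.comp x haff).congr_deriv (mul_comm _ _)

lemma hasDerivAt_edgeCutoff (n : ℕ) (x : ℝ) :
    HasDerivAt (edgeCutoff n) (edgeKernel n x - edgeKernel n (1 - x)) x := by
  have hrefl : HasDerivAt (fun y : ℝ => 1 - y) (-1) x := by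
    simpa using (hasDerivAt_id x).const_sub 1
  have hright := (hasDerivAt_smoothTransition_edge n (1 - x)).comp x hrefl
  exact (((hasDerivAt_smoothTransition_edge n x).add hright).sub_const 1).congr_deriv (by ring)

lemma edgeKernel_nonneg (n : ℕ) (x : ℝ) : 0 ≤ edgeKernel n x :=
  mul_nonneg (by positivity) Real.smoothTransition.monotone.deriv_nonneg

lemma abs_edgeCutoff_le_one (n : ℕ) (x : ℝ) : |edgeCutoff n x| ≤ 1 := by
  have h₁ := Real.smoothTransition.nonneg ((n + 4) * x - 1)
  have h₂ := Real.smoothTransition.le_one ((n + 4) * x - 1)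
  have h₃ := Real.smoothTransition.nonneg ((n + 4) * (1 - x) - 1)
  have h₄ := Real.smoothTransition.le_one ((n + 4) * (1 - x) - 1)
  rw [edgeCutoff, abs_le]
  constructor <;> linarith

lemma support_deriv_smoothTransition_subset :
    Function.support (deriv smoothTransition) ⊆ Icc 0 1 := by
  refine Function.support_subset_iff'.2 fun x hx => ?_
  rw [mem_Icc, not_and_or, not_le, not_le] at hx
  rcases hx with hx | hx
  · have hzero : smoothTransition =ᶠ[𝓝 x] fun _ => 0 :=
      (eventually_lt_nhds hx).mono fun _ hy => Real.smoothTransition.zero_of_nonpos hy.le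
    rw [hzero.deriv_eq, deriv_const]
  · have hone : smoothTransition =ᶠ[𝓝 x] fun _ => 1 :=
      (eventually_gt_nhds hx).mono fun _ hy => Real.smoothTransition.one_of_one_le hy.le
    rw [hone.deriv_eq, deriv_const]

lemma support_edgeKernel_subset (n : ℕ) :
    Function.support (edgeKernel n) ⊆ Icc (1 / (n + 4)) (2 / (n + 4)) := by
  intro x hx
  have h := support_deriv_smoothTransition_subset (right_ne_zero_of_mul hx)
  rw [mem_Icc, div_le_iff₀' (by positivity), le_div_iff₀' (by positivity)]
  constructor <;> linarith [h.1, h.2]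

lemma support_edgeCutoff_subset (n : ℕ) :
    Function.support (edgeCutoff n) ⊆ Icc (1 / (n + 4)) (1 - 1 / (n + 4)) := by
  have hn : (0 : ℝ) < n + 4 := by positivity
  refine Function.support_subset_iff'.2 fun x hx => ?_
  rw [mem_Icc, le_sub_comm, not_and_or, not_le, not_le, lt_div_iff₀' hn, lt_div_iff₀' hn] at hx
  rcases hx with h | h
  · rw [edgeCutoff, Real.smoothTransition.zero_of_nonpos (by linarith),
      Real.smoothTransition.one_of_one_le (by linarith), zero_add, sub_self]
  · rw [edgeCutoff, Real.smoothTransition.zero_of_nonpos (x := (n + 4) * (1 - x) - 1) (by linarith),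
      Real.smoothTransition.one_of_one_le (by linarith), add_zero, sub_self]

lemma isTestFunction_edgeKernel (n : ℕ) : IsTestFunction (Ioo 0 1) (edgeKernel n) := by
  have hn : (2 : ℝ) / (n + 4) < 1 := by rw [div_lt_one (by positivity)]; linarith
  exact .of_support_subset (contDiff_edgeKernel n) isCompact_Icc
    (Icc_subset_Ioo (by positivity) hn) (support_edgeKernel_subset n)

lemma isTestFunction_edgeCutoff (n : ℕ) : IsTestFunction (Ioo 0 1) (edgeCutoff n) :=
  .of_support_subset (contDiff_edgeCutoff n) isCompact_Icc
    (Icc_subset_Ioo (by positivity) (sub_lt_self _ (by positivity))) (support_edgeCutoff_subset n)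

lemma tendsto_edgeCutoff (hx : x ∈ Ioo (0 : ℝ) 1) :
    Tendsto (fun n : ℕ => edgeCutoff n x) atTop (𝓝 1) := by
  refine tendsto_const_nhds.congr' ?_
  have hleft := (tendsto_natCast_atTop_atTop (R := ℝ)).atTop_mul_const hx.1
  have hright := (tendsto_natCast_atTop_atTop (R := ℝ)).atTop_mul_const (sub_pos.2 hx.2)
  filter_upwards [hleft.eventually_ge_atTop 2, hright.eventually_ge_atTop 2] with n hn₁ hn₂
  rw [edgeCutoff, Real.smoothTransition.one_of_one_le (by linarith [hx.1]),
    Real.smoothTransition.one_of_one_le (by linarith [hx.2]), add_sub_cancel_right]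

lemma integral_edgeKernel (n : ℕ) : ∫ x in Ioo (0 : ℝ) 1, edgeKernel n x = 1 := by
  rw [← intervalIntegral_eq_setIntegral_Ioo zero_le_one,
    intervalIntegral.integral_eq_sub_of_hasDerivAt
      (fun x _ => hasDerivAt_smoothTransition_edge n x)
      ((contDiff_edgeKernel n).continuous.intervalIntegrable _ _),
    Real.smoothTransition.one_of_one_le (by linarith [n.cast_nonneg (α := ℝ)]),
    Real.smoothTransition.zero_of_nonpos (by linarith), sub_zero]

end EdgeCutoff

section EssentialLimits

/-- The filter of essential limits at `a` from within `(0, 1)`, used at the endpoints. Null sets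
are discarded because only almost every slice of an `L¹` function is integrable. -/
def essNhds (a : ℝ) : Filter ℝ := 𝓝 a ⊓ ae (volume.restrict (Ioo (0 : ℝ) 1))

lemma essNhds_zero_le : essNhds 0 ≤ 𝓝[>] 0 :=
  le_inf inf_le_left <| inf_le_right.trans <| le_principal_iff.2 <|
    (ae_restrict_mem measurableSet_Ioo).mono fun _ hx => hx.1

lemma essNhds_one_le : essNhds 1 ≤ 𝓝[<] 1 :=
  le_inf inf_le_left <| inf_le_right.trans <| le_principal_iff.2 <|
    (ae_restrict_mem measurableSet_Ioo).mono fun _ hx => hx.2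

lemma measurePreserving_one_sub : MeasurePreserving (fun x : ℝ => 1 - x)
    (volume.restrict (Ioo 0 1)) (volume.restrict (Ioo 0 1)) := by
  simpa using (Measure.measurePreserving_sub_left volume (1 : ℝ)).restrict_preimage
    (measurableSet_Ioo (a := 0) (b := 1))

lemma tendsto_one_sub_essNhds : Tendsto (fun x : ℝ => 1 - x) (essNhds 0) (essNhds 1) :=
  ((continuous_const.sub continuous_id).tendsto' 0 1 (sub_zero 1)).inf
    measurePreserving_one_sub.quasiMeasurePreserving.tendsto_ae

variable {F ψ : ℝ → ℝ} {a b : ℝ}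

lemma tendsto_mul_continuous_essNhds {c : ℝ} (hF : Tendsto F (essNhds c) (𝓝 a))
    (hψ : Continuous ψ) : Tendsto (fun x => F x * ψ x) (essNhds c) (𝓝 (a * ψ c)) :=
  hF.mul ((hψ.tendsto c).mono_left inf_le_left)

lemma integrableOn_Ioo_mul (hF : IntegrableOn F (Ioo a b)) (hψ : Continuous ψ) :
    IntegrableOn (fun x => F x * ψ x) (Ioo a b) :=
  integrableOn_mul_of_isCompact_closure hF measurableSet_Ioo (isCompact_closure_Ioo a b) hψ

lemma tendsto_integral_mul_edgeKernel (hF : IntegrableOn F (Ioo 0 1))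
    (ha : Tendsto F (essNhds 0) (𝓝 a)) :
    Tendsto (fun n => ∫ x in Ioo (0 : ℝ) 1, F x * edgeKernel n x) atTop (𝓝 a) := by
  rw [Metric.tendsto_atTop']
  intro ε hε
  obtain ⟨s, hs, t, ht, hst⟩ :=
    eventually_inf.1 (ha.eventually (Metric.closedBall_mem_nhds a (half_pos hε)))
  obtain ⟨δ, hδ, hball⟩ := Metric.mem_nhds_iff.1 hs
  obtain ⟨N, hN⟩ := exists_nat_gt (2 / δ)
  refine ⟨N, fun n hn => ?_⟩
  have hnδ : 2 / (n + 4) < δ := by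
    rw [div_lt_comm₀ (by positivity) hδ]
    exact hN.trans (by exact_mod_cast hn.trans (Nat.lt_add_of_pos_right four_pos))
  have hκ : IntegrableOn (edgeKernel n) (Ioo 0 1) := (isTestFunction_edgeKernel n).integrable
  have hsub : (∫ x in Ioo (0 : ℝ) 1, F x * edgeKernel n x) - a
      = ∫ x in Ioo (0 : ℝ) 1, (F x - a) * edgeKernel n x := by
    simp_rw [sub_mul]
    rw [integral_sub (integrableOn_Ioo_mul hF (contDiff_edgeKernel n).continuous)
      (hκ.const_mul a), integral_const_mul, integral_edgeKernel, mul_one]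
  rw [Real.dist_eq, hsub, ← Real.norm_eq_abs]
  calc _ ≤ ∫ x in Ioo (0 : ℝ) 1, ε / 2 * edgeKernel n x := by
        refine norm_integral_le_of_norm_le (hκ.const_mul _) ?_
        filter_upwards [ae_restrict_mem measurableSet_Ioo, ht] with x hx hxt
        rw [norm_mul, Real.norm_of_nonneg (edgeKernel_nonneg n x)]
        by_cases hxn : edgeKernel n x = 0
        · simp [hxn]
        · have hxδ : x < δ := (support_edgeKernel_subset n hxn).2.trans_lt hnδ
          exact mul_le_mul_of_nonneg_right
            (hst x ⟨hball (by rwa [mem_ball_zero_iff, Real.norm_of_nonneg hx.1.le]), hxt⟩)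
            (edgeKernel_nonneg n x)
    _ = ε / 2 := by rw [integral_const_mul, integral_edgeKernel, mul_one]
    _ < ε := half_lt_self hε

lemma tendsto_integral_mul_edgeKernel_one_sub (hF : IntegrableOn F (Ioo 0 1))
    (hb : Tendsto F (essNhds 1) (𝓝 b)) :
    Tendsto (fun n => ∫ x in Ioo (0 : ℝ) 1, F x * edgeKernel n (1 - x)) atTop (𝓝 b) := by
  have hemb := (Homeomorph.subLeft (1 : ℝ)).measurableEmbedding
  have hrefl := tendsto_integral_mul_edgeKernel
    ((measurePreserving_one_sub.integrable_comp_emb hemb).2 hF) (hb.comp tendsto_one_sub_essNhds)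
  refine hrefl.congr fun n => ?_
  rw [← measurePreserving_one_sub.integral_comp hemb]
  simp only [Function.comp_apply, sub_sub_cancel]

lemma tendsto_integral_mul_edgeCutoff (hF : IntegrableOn F (Ioo 0 1)) :
    Tendsto (fun n => ∫ x in Ioo (0 : ℝ) 1, F x * edgeCutoff n x) atTop
      (𝓝 (∫ x in Ioo (0 : ℝ) 1, F x)) := by
  refine tendsto_integral_of_dominated_convergence (fun x => |F x|)
    (fun n => hF.1.mul (contDiff_edgeCutoff n).continuous.aestronglyMeasurable) hF.abs
    (fun n => ae_of_all _ fun x => ?_) ?_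
  · rw [norm_mul]
    exact mul_le_of_le_one_right (abs_nonneg _) (abs_edgeCutoff_le_one n x)
  · filter_upwards [ae_restrict_mem measurableSet_Ioo] with x hx
    simpa using (tendsto_edgeCutoff hx).const_mul (F x)

lemma tendsto_integral_mul_deriv_mul_edgeCutoff (hF : IntegrableOn F (Ioo 0 1))
    (hψ : ContDiff ℝ 1 ψ) (ha : Tendsto F (essNhds 0) (𝓝 a)) (hb : Tendsto F (essNhds 1) (𝓝 b)) :
    Tendsto (fun n => ∫ x in Ioo (0 : ℝ) 1, F x * deriv (fun y => ψ y * edgeCutoff n y) x) atTop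
      (𝓝 ((∫ x in Ioo (0 : ℝ) 1, F x * deriv ψ x) + (a * ψ 0 - b * ψ 1))) := by
  have hFψ := integrableOn_Ioo_mul hF hψ.continuous
  have hFψ' := integrableOn_Ioo_mul hF (hψ.continuous_deriv le_rfl)
  refine ((tendsto_integral_mul_edgeCutoff hFψ').add
    ((tendsto_integral_mul_edgeKernel hFψ (tendsto_mul_continuous_essNhds ha hψ.continuous)).sub
      (tendsto_integral_mul_edgeKernel_one_sub hFψ
        (tendsto_mul_continuous_essNhds hb hψ.continuous)))).congr fun n => ?_
  have hκ := (contDiff_edgeKernel n).continuous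
  have hleft := integrableOn_Ioo_mul hFψ hκ
  have hright : IntegrableOn (fun x => F x * ψ x * edgeKernel n (1 - x)) (Ioo 0 1) :=
    integrableOn_Ioo_mul hFψ (hκ.comp (continuous_sub_left 1))
  have hmid := integrableOn_Ioo_mul hFψ' (contDiff_edgeCutoff n).continuous
  rw [← integral_sub hleft hright, ← integral_add hmid (by exact hleft.sub hright)]
  refine integral_congr_ae (ae_of_all _ fun x => ?_)
  have hderiv :=
    ((hψ.differentiable one_ne_zero x).hasDerivAt.mul (hasDerivAt_edgeCutoff n x)).deriv
  beta_reduce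
  rw [show deriv (fun y => ψ y * edgeCutoff n y) x = _ from hderiv]
  ring

end EssentialLimits

section Density

variable {h : ℝ → ℝ} {ε : ℝ}

lemma tendsto_integral_abs_mul_edgeCutoff_sub (hh : IntegrableOn h (Ioo 0 1)) :
    Tendsto (fun n => ∫ x in Ioo (0 : ℝ) 1, |h x * edgeCutoff n x - h x|) atTop (𝓝 0) := by
  have hconv : ∀ᵐ x ∂volume.restrict (Ioo (0 : ℝ) 1),
      Tendsto (fun n => |h x * edgeCutoff n x - h x|) atTop (𝓝 0) := by
    filter_upwards [ae_restrict_mem measurableSet_Ioo] with x hx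
    simpa using (((tendsto_edgeCutoff hx).const_mul (h x)).sub_const (h x)).abs
  have hlim := tendsto_integral_of_dominated_convergence (fun x => |h x| + |h x|)
    (fun n => ((integrableOn_Ioo_mul hh (contDiff_edgeCutoff n).continuous).sub hh).abs.1)
    (hh.abs.add hh.abs) (fun n => ae_of_all _ fun x => ?_) hconv
  · simpa only [integral_zero, Pi.sub_apply] using hlim
  · rw [norm_abs_eq_norm]
    refine (norm_sub_le _ _).trans (add_le_add_left ?_ _)
    rw [norm_mul]
    exact mul_le_of_le_one_right (abs_nonneg _) (abs_edgeCutoff_le_one n x)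

lemma exists_isTestFunction_integral_abs_sub_le (hh : IntegrableOn h (Ioo 0 1)) (hε : 0 < ε) :
    ∃ g, IsTestFunction (Ioo 0 1) g ∧ ∫ x in Ioo (0 : ℝ) 1, |g x - h x| ≤ ε := by
  obtain ⟨f, hfc, hf, hfh⟩ := (memLp_one_iff_integrable.2 hh).exist_eLpNorm_sub_le
    (by simp) le_rfl (half_pos hε)
  have hfI : IntegrableOn f (Ioo 0 1) :=
    (hf.continuous.integrable_of_hasCompactSupport hfc).integrableOn
  have hfh' : ∫ x in Ioo (0 : ℝ) 1, |f x - h x| ≤ ε / 2 := by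
    rw [eLpNorm_sub_comm, eLpNorm_one_eq_lintegral_enorm] at hfh
    refine (integral_norm_eq_lintegral_enorm (hfI.sub hh).1).trans_le ?_
    exact ENNReal.toReal_le_of_le_ofReal (half_pos hε).le hfh
  obtain ⟨n, hn⟩ := ((tendsto_integral_abs_mul_edgeCutoff_sub hfI).eventually_le_const
    (half_pos hε)).exists
  have hcut := integrableOn_Ioo_mul hfI (contDiff_edgeCutoff n).continuous
  refine ⟨fun x => f x * edgeCutoff n x, (isTestFunction_edgeCutoff n).mul_left
    (hf.of_le (by exact_mod_cast le_top)), ?_⟩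
  calc ∫ x in Ioo (0 : ℝ) 1, |f x * edgeCutoff n x - h x|
      ≤ ∫ x in Ioo (0 : ℝ) 1, (|f x * edgeCutoff n x - f x| + |f x - h x|) :=
        integral_mono (hcut.sub hh).abs ((hcut.sub hfI).abs.add (hfI.sub hh).abs)
          fun x => abs_sub_le _ _ _
    _ = (∫ x in Ioo (0 : ℝ) 1, |f x * edgeCutoff n x - f x|) + ∫ x in Ioo (0 : ℝ) 1, |f x - h x| :=
        integral_add (hcut.sub hfI).abs (hfI.sub hh).abs
    _ ≤ ε := by linarith

lemma exists_contDiff_abs_le_mul_add {δ : ℝ} (hδ : 0 < δ) : ∃ σ : ℝ → ℝ, ContDiff ℝ 1 σ ∧ σ 0 = 0 ∧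
    (∀ x, |σ x| ≤ 1) ∧ ∀ x, |x| ≤ x * σ x + δ := by
  have hpos : ∀ x : ℝ, 0 < x ^ 2 + δ ^ 2 := fun x => by positivity
  have hsqrt : ∀ x : ℝ, |x| ≤ √(x ^ 2 + δ ^ 2) := fun x =>
    Real.abs_le_sqrt (le_add_of_nonneg_right (sq_nonneg δ))
  refine ⟨fun x => x / √(x ^ 2 + δ ^ 2), ?_, by simp, fun x => ?_, fun x => ?_⟩
  · exact contDiff_id.div (((contDiff_id.pow 2).add contDiff_const).sqrt fun x => (hpos x).ne')
      fun x => (Real.sqrt_pos.2 (hpos x)).ne'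
  · rw [abs_div, abs_of_nonneg (Real.sqrt_nonneg _)]
    exact div_le_one_of_le₀ (hsqrt x) (Real.sqrt_nonneg _)
  · have hr := Real.sqrt_pos.2 (hpos x)
    have hrle : √(x ^ 2 + δ ^ 2) ≤ |x| + δ := by
      rw [Real.sqrt_le_left (by positivity), add_sq, sq_abs]
      nlinarith [mul_nonneg (abs_nonneg x) hδ.le]
    have hsq : x * (x / √(x ^ 2 + δ ^ 2)) = |x| ^ 2 / √(x ^ 2 + δ ^ 2) := by
      rw [sq_abs, sq, mul_div_assoc]
    rw [hsq, ← sub_le_iff_le_add, le_div_iff₀ hr]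
    nlinarith [mul_le_mul_of_nonneg_left hrle (abs_nonneg x),
      mul_le_mul_of_nonneg_left (hsqrt x) hδ.le]

lemma integral_abs_le_of_forall_isTestFunction {R : ℝ} (hh : IntegrableOn h (Ioo 0 1))
    (hR : ∀ φ, IsTestFunction (Ioo 0 1) φ → (∀ x, |φ x| ≤ 1) →
      ∫ x in Ioo (0 : ℝ) 1, h x * φ x ≤ R) :
    ∫ x in Ioo (0 : ℝ) 1, |h x| ≤ R := by
  refine le_of_forall_pos_le_add fun ε hε => ?_
  obtain ⟨f, hf, hfh⟩ := exists_isTestFunction_integral_abs_sub_le hh (half_pos (half_pos hε))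
  obtain ⟨σ, hσ, hσ0, hσ1, hσle⟩ := exists_contDiff_abs_le_mul_add (half_pos hε)
  have hφ := hf.comp_left hσ hσ0
  have hpt : ∀ x, |h x| ≤ h x * σ (f x) + 2 * |f x - h x| + ε / 2 := by
    intro x
    have htri : |h x| ≤ |f x| + |f x - h x| := by
      simpa [abs_sub_comm] using abs_add_le (f x) (h x - f x)
    have herr : (f x - h x) * σ (f x) ≤ |f x - h x| :=
      (le_abs_self _).trans (by rw [abs_mul]; exact mul_le_of_le_one_right (abs_nonneg _) (hσ1 _))
    linarith [hσle (f x)]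
  have hmulφ := integrableOn_Ioo_mul hh hφ.continuous
  have hdiff : IntegrableOn (fun x => 2 * |f x - h x|) (Ioo 0 1) :=
    (hf.integrable.integrableOn.sub hh).abs.const_mul 2
  have hconst : IntegrableOn (fun _ : ℝ => ε / 2) (Ioo 0 1) := integrableOn_const (by simp)
  calc ∫ x in Ioo (0 : ℝ) 1, |h x|
      ≤ ∫ x in Ioo (0 : ℝ) 1, (h x * σ (f x) + 2 * |f x - h x| + ε / 2) :=
        integral_mono hh.abs ((hmulφ.add hdiff).add hconst) hpt
    _ = (∫ x in Ioo (0 : ℝ) 1, h x * σ (f x)) + 2 * (∫ x in Ioo (0 : ℝ) 1, |f x - h x|)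
          + ε / 2 := by
        rw [integral_add (by exact hmulφ.add hdiff) hconst, integral_add hmulφ hdiff,
          integral_const_mul]
        simp
    _ ≤ R + ε := by linarith [hR _ hφ fun x => hσ1 _]

end Density

section Variation

variable {Ω : Set (ℝ × ℝ)} {u ξ η : ℝ × ℝ → ℝ} {ζ : ℝ × ℝ → ℝ × ℝ}

/-- The vector fields on `Ω` competing in the definition of the total variation: `C¹` and compactly
supported in `Ω`, with Euclidean norm at most `1` (the norm of `ℝ × ℝ` is the sup norm). -/
structure IsAdmissibleField (Ω : Set (ℝ × ℝ)) (ζ : ℝ × ℝ → ℝ × ℝ) : Prop where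
  contDiff : ContDiff ℝ 1 ζ
  hasCompactSupport : HasCompactSupport ζ
  tsupport_subset : tsupport ζ ⊆ Ω
  sq_add_sq_le_one : ∀ z, (ζ z).1 ^ 2 + (ζ z).2 ^ 2 ≤ 1

/-- The divergence of a planar vector field. -/
def divergence (ζ : ℝ × ℝ → ℝ × ℝ) (z : ℝ × ℝ) : ℝ :=
  (fderiv ℝ ζ z (1, 0)).1 + (fderiv ℝ ζ z (0, 1)).2

lemma mem_varSet_iff {v : ℝ} :
    v ∈ varSet Ω u ↔ ∃ ζ, IsAdmissibleField Ω ζ ∧ v = ∫ z in Ω, u z * divergence ζ z := by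
  simp only [varSet, divergence, mul_add, mem_ofPred_eq]
  exact ⟨fun ⟨ζ, h₁, h₂, h₃, h₄, hv⟩ => ⟨ζ, ⟨h₁, h₂, h₃, h₄⟩, hv⟩,
    fun ⟨ζ, ⟨h₁, h₂, h₃, h₄⟩, hv⟩ => ⟨ζ, h₁, h₂, h₃, h₄, hv⟩⟩

lemma divergence_prodMk {z : ℝ × ℝ} (hξ : DifferentiableAt ℝ ξ z) (hη : DifferentiableAt ℝ η z) :
    divergence (fun z => (ξ z, η z)) z = fderiv ℝ ξ z (1, 0) + fderiv ℝ η z (0, 1) := by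
  simp only [divergence, (hξ.hasFDerivAt.prodMk hη.hasFDerivAt).fderiv,
    ContinuousLinearMap.prod_apply]

lemma IsTestFunction.prodMk (hξ : IsTestFunction Ω ξ) (hη : IsTestFunction Ω η)
    (hle : ∀ z, ξ z ^ 2 + η z ^ 2 ≤ 1) : IsAdmissibleField Ω fun z => (ξ z, η z) := by
  have hK : IsCompact (tsupport ξ ∪ tsupport η) :=
    IsCompact.union hξ.hasCompactSupport hη.hasCompactSupport
  have hsupp : Function.support (fun z => (ξ z, η z)) ⊆ tsupport ξ ∪ tsupport η := by
    rw [Function.support_prodMk]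
    exact union_subset_union subset_closure subset_closure
  exact ⟨hξ.contDiff.prodMk hη.contDiff, .of_support_subset_isCompact hK hsupp,
    (closure_minimal hsupp hK.isClosed).trans
      (union_subset hξ.tsupport_subset hη.tsupport_subset), hle⟩

namespace IsAdmissibleField

lemma fst (hζ : IsAdmissibleField Ω ζ) : IsTestFunction Ω fun z => (ζ z).1 :=
  ⟨hζ.contDiff.fst, hζ.hasCompactSupport.comp_left rfl,
    (tsupport_comp_subset rfl ζ).trans hζ.tsupport_subset⟩

lemma snd (hζ : IsAdmissibleField Ω ζ) : IsTestFunction Ω fun z => (ζ z).2 :=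
  ⟨hζ.contDiff.snd, hζ.hasCompactSupport.comp_left rfl,
    (tsupport_comp_subset rfl ζ).trans hζ.tsupport_subset⟩

lemma abs_fst_le_one (hζ : IsAdmissibleField Ω ζ) (z : ℝ × ℝ) : |(ζ z).1| ≤ 1 :=
  (sq_le_one_iff_abs_le_one _).1 (by nlinarith [hζ.sq_add_sq_le_one z])

lemma abs_snd_le_one (hζ : IsAdmissibleField Ω ζ) (z : ℝ × ℝ) : |(ζ z).2| ≤ 1 :=
  (sq_le_one_iff_abs_le_one _).1 (by nlinarith [hζ.sq_add_sq_le_one z])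

lemma divergence_eq (hζ : IsAdmissibleField Ω ζ) : divergence ζ = fun z =>
    fderiv ℝ (fun z => (ζ z).1) z (1, 0) + fderiv ℝ (fun z => (ζ z).2) z (0, 1) :=
  funext fun z => divergence_prodMk (hζ.fst.differentiableAt z) (hζ.snd.differentiableAt z)

lemma integral_mul_divergence (hζ : IsAdmissibleField Ω ζ) (hu : IntegrableOn u Ω) :
    ∫ z in Ω, u z * divergence ζ z = (∫ z in Ω, u z * fderiv ℝ (fun z => (ζ z).1) z (1, 0)) +
      ∫ z in Ω, u z * fderiv ℝ (fun z => (ζ z).2) z (0, 1) := by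
  simp only [hζ.divergence_eq, mul_add]
  exact integral_add (hζ.fst.integrable_mul_fderiv hu _) (hζ.snd.integrable_mul_fderiv hu _)

end IsAdmissibleField

lemma zero_mem_varSet (Ω : Set (ℝ × ℝ)) (u : ℝ × ℝ → ℝ) : 0 ∈ varSet Ω u :=
  ⟨0, contDiff_zero_fun, .zero, by simp, by simp, by simp⟩

lemma totalVar_nonneg (Ω : Set (ℝ × ℝ)) (u : ℝ × ℝ → ℝ) : 0 ≤ totalVar Ω u :=
  Real.sSup_nonneg' ⟨0, zero_mem_varSet Ω u, le_rfl⟩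

lemma integral_mul_fderiv_const_mul (hξ : IsTestFunction Ω ξ) (c : ℝ) (e : ℝ × ℝ) :
    ∫ z in Ω, u z * fderiv ℝ (fun z => c * ξ z) z e = c * ∫ z in Ω, u z * fderiv ℝ ξ z e := by
  rw [← integral_const_mul]
  refine integral_congr_ae (ae_of_all _ fun z => ?_)
  beta_reduce
  rw [fderiv_const_mul (hξ.differentiableAt z), smul_apply, smul_eq_mul,
    mul_left_comm]

lemma sq_add_sq_le_sq_of_forall_mul_add_mul_le {A B R : ℝ}
    (h : ∀ s c : ℝ, s ^ 2 + c ^ 2 ≤ 1 → s * A + c * B ≤ R) : A ^ 2 + B ^ 2 ≤ R ^ 2 := by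
  have hunit : (A / √(A ^ 2 + B ^ 2)) ^ 2 + (B / √(A ^ 2 + B ^ 2)) ^ 2 ≤ 1 := by
    rw [div_pow, div_pow, ← add_div, Real.sq_sqrt (by positivity)]
    exact div_self_le_one _
  have hR := h _ _ hunit
  rw [div_mul_eq_mul_div, div_mul_eq_mul_div, ← add_div, ← sq, ← sq, Real.div_sqrt] at hR
  exact (Real.sqrt_le_iff.1 hR).2

lemma sq_integral_fderiv_add_sq_integral_fderiv_le (hu : IsBVOn Ω u) (hξ : IsTestFunction Ω ξ)
    (hη : IsTestFunction Ω η) (hξ1 : ∀ z, |ξ z| ≤ 1) (hη1 : ∀ z, |η z| ≤ 1) :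
    (∫ z in Ω, u z * fderiv ℝ ξ z (1, 0)) ^ 2 + (∫ z in Ω, u z * fderiv ℝ η z (0, 1)) ^ 2
      ≤ totalVar Ω u ^ 2 := by
  refine sq_add_sq_le_sq_of_forall_mul_add_mul_le fun s c hsc => ?_
  have hζ := (hξ.mul_left (contDiff_const (c := s))).prodMk (hη.mul_left (contDiff_const (c := c)))
    fun z => by
      have hξ2 := (sq_le_one_iff_abs_le_one _).2 (hξ1 z)
      have hη2 := (sq_le_one_iff_abs_le_one _).2 (hη1 z)
      nlinarith [sq_nonneg s, sq_nonneg c]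
  rw [← integral_mul_fderiv_const_mul hξ, ← integral_mul_fderiv_const_mul hη,
    ← hζ.integral_mul_divergence hu.1]
  exact le_csSup hu.2 (mem_varSet_iff.2 ⟨_, hζ, rfl⟩)

end Variation

section UnitSquare

variable {u : ℝ × ℝ → ℝ} {φ ψ : ℝ → ℝ}

/-- The tensor product `(x, y) ↦ φ x * ψ y`. -/
def tensor (φ ψ : ℝ → ℝ) (z : ℝ × ℝ) : ℝ := φ z.1 * ψ z.2

lemma continuous_tensor (hφ : Continuous φ) (hψ : Continuous ψ) : Continuous (tensor φ ψ) :=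
  (hφ.comp continuous_fst).mul (hψ.comp continuous_snd)

lemma IsTestFunction.tensor {U V : Set ℝ} (hφ : IsTestFunction U φ) (hψ : IsTestFunction V ψ) :
    IsTestFunction (U ×ˢ V) (tensor φ ψ) :=
  .of_support_subset ((hφ.contDiff.comp contDiff_fst).mul (hψ.contDiff.comp contDiff_snd))
    (hφ.hasCompactSupport.isCompact.prod hψ.hasCompactSupport.isCompact)
    (prod_mono hφ.tsupport_subset hψ.tsupport_subset) fun _ hz =>
      ⟨subset_tsupport _ (left_ne_zero_of_mul hz), subset_tsupport _ (right_ne_zero_of_mul hz)⟩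

lemma fderiv_tensor {z : ℝ × ℝ} (hφ : DifferentiableAt ℝ φ z.1) (hψ : DifferentiableAt ℝ ψ z.2)
    (v : ℝ × ℝ) :
    fderiv ℝ (tensor φ ψ) z v = v.1 * (deriv φ z.1 * ψ z.2) + v.2 * (φ z.1 * deriv ψ z.2) := by
  have h₁ : HasFDerivAt (fun z : ℝ × ℝ => φ z.1) (deriv φ z.1 • ContinuousLinearMap.fst ℝ ℝ ℝ) z :=
    hφ.hasDerivAt.comp_hasFDerivAt z hasFDerivAt_fst
  have h₂ : HasFDerivAt (fun z : ℝ × ℝ => ψ z.2) (deriv ψ z.2 • ContinuousLinearMap.snd ℝ ℝ ℝ) z :=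
    hψ.hasDerivAt.comp_hasFDerivAt z hasFDerivAt_snd
  rw [show fderiv ℝ (tensor φ ψ) z = _ from (h₁.mul h₂).fderiv]
  simp only [add_apply, smul_apply,
    ContinuousLinearMap.coe_fst', ContinuousLinearMap.coe_snd', smul_eq_mul]
  ring

lemma measurableSet_unitSquare : MeasurableSet unitSquare :=
  measurableSet_Ioo.prod measurableSet_Ioo

lemma isCompact_closure_unitSquare : IsCompact (closure unitSquare) :=
  ((Metric.isBounded_Ioo 0 1).prod (Metric.isBounded_Ioo 0 1)).isCompact_closure

lemma volume_restrict_unitSquare : (volume : Measure (ℝ × ℝ)).restrict unitSquare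
    = (volume.restrict (Ioo (0 : ℝ) 1)).prod (volume.restrict (Ioo (0 : ℝ) 1)) := by
  rw [Measure.prod_restrict, unitSquare, Measure.volume_eq_prod]

lemma integrableOn_unitSquare_iff : IntegrableOn u unitSquare ↔
    Integrable u ((volume.restrict (Ioo (0 : ℝ) 1)).prod (volume.restrict (Ioo (0 : ℝ) 1))) := by
  rw [IntegrableOn, volume_restrict_unitSquare]

lemma integral_unitSquare (hu : IntegrableOn u unitSquare) :
    ∫ z in unitSquare, u z = ∫ x in Ioo (0 : ℝ) 1, ∫ y in Ioo (0 : ℝ) 1, u (x, y) := by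
  rw [volume_restrict_unitSquare, integral_prod _ (integrableOn_unitSquare_iff.1 hu)]

lemma integral_unitSquare_symm (hu : IntegrableOn u unitSquare) :
    ∫ z in unitSquare, u z = ∫ y in Ioo (0 : ℝ) 1, ∫ x in Ioo (0 : ℝ) 1, u (x, y) := by
  rw [volume_restrict_unitSquare, integral_prod_symm _ (integrableOn_unitSquare_iff.1 hu)]

lemma integrableOn_unitSquare_mul {Φ : ℝ × ℝ → ℝ} (hu : IntegrableOn u unitSquare)
    (hΦ : Continuous Φ) : IntegrableOn (fun z => u z * Φ z) unitSquare :=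
  integrableOn_mul_of_isCompact_closure hu measurableSet_unitSquare isCompact_closure_unitSquare hΦ

lemma integrableOn_integral_mul_fst (hu : IntegrableOn u unitSquare) (hφ : Continuous φ) :
    IntegrableOn (fun y => ∫ x in Ioo (0 : ℝ) 1, u (x, y) * φ x) (Ioo 0 1) :=
  (integrableOn_unitSquare_iff.1
    (integrableOn_unitSquare_mul hu (hφ.comp continuous_fst))).integral_prod_right

lemma integrableOn_integral_mul_snd (hu : IntegrableOn u unitSquare) (hψ : Continuous ψ) :
    IntegrableOn (fun x => ∫ y in Ioo (0 : ℝ) 1, u (x, y) * ψ y) (Ioo 0 1) :=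
  (integrableOn_unitSquare_iff.1
    (integrableOn_unitSquare_mul hu (hψ.comp continuous_snd))).integral_prod_left

lemma integral_integral_mul_mul (hu : IntegrableOn u unitSquare) (hφ : Continuous φ)
    (hψ : Continuous ψ) :
    ∫ x in Ioo (0 : ℝ) 1, (∫ y in Ioo (0 : ℝ) 1, u (x, y) * ψ y) * φ x
      = ∫ z in unitSquare, u z * tensor φ ψ z := by
  rw [integral_unitSquare (integrableOn_unitSquare_mul hu (continuous_tensor hφ hψ))]
  simp only [tensor, ← integral_mul_const, mul_assoc, mul_comm (ψ _)]

lemma integral_integral_mul_mul_symm (hu : IntegrableOn u unitSquare) (hφ : Continuous φ)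
    (hψ : Continuous ψ) :
    ∫ y in Ioo (0 : ℝ) 1, (∫ x in Ioo (0 : ℝ) 1, u (x, y) * φ x) * ψ y
      = ∫ z in unitSquare, u z * tensor φ ψ z := by
  rw [integral_unitSquare_symm (integrableOn_unitSquare_mul hu (continuous_tensor hφ hψ))]
  simp only [tensor, ← integral_mul_const, mul_assoc]

lemma integral_mul_fderiv_tensor_fst (hu : IntegrableOn u unitSquare) (hφ : ContDiff ℝ 1 φ)
    (hψ : ContDiff ℝ 1 ψ) : ∫ z in unitSquare, u z * fderiv ℝ (tensor φ ψ) z (1, 0)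
      = ∫ x in Ioo (0 : ℝ) 1, (∫ y in Ioo (0 : ℝ) 1, u (x, y) * ψ y) * deriv φ x := by
  rw [integral_integral_mul_mul hu (hφ.continuous_deriv le_rfl) hψ.continuous]
  simp only [fderiv_tensor (hφ.differentiable one_ne_zero _) (hψ.differentiable one_ne_zero _),
    one_mul, zero_mul, add_zero, tensor]

lemma integral_mul_fderiv_tensor_snd (hu : IntegrableOn u unitSquare) (hφ : ContDiff ℝ 1 φ)
    (hψ : ContDiff ℝ 1 ψ) : ∫ z in unitSquare, u z * fderiv ℝ (tensor φ ψ) z (0, 1)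
      = ∫ y in Ioo (0 : ℝ) 1, (∫ x in Ioo (0 : ℝ) 1, u (x, y) * φ x) * deriv ψ y := by
  rw [integral_integral_mul_mul_symm hu hφ.continuous (hψ.continuous_deriv le_rfl)]
  simp only [fderiv_tensor (hφ.differentiable one_ne_zero _) (hψ.differentiable one_ne_zero _),
    one_mul, zero_mul, zero_add, tensor]

end UnitSquare

section Traces

variable {u ξ : ℝ × ℝ → ℝ} {h φ κ Φ : ℝ → ℝ}

/-- `w` has boundary trace `h` on the bottom side of the unit square and `0` on the other three
sides; for `h = M.indicator 1` this is `HasSquareTraceIndicator w M`. -/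
def HasBottomTrace (w : ℝ × ℝ → ℝ) (h : ℝ → ℝ) : Prop :=
  Tendsto (fun t : ℝ => ∫ x in (0 : ℝ)..1, |w (x, t) - h x|) (𝓝[>] (0 : ℝ)) (𝓝 0) ∧
  Tendsto (fun t : ℝ => ∫ x in (0 : ℝ)..1, |w (x, t)|) (𝓝[<] (1 : ℝ)) (𝓝 0) ∧
  Tendsto (fun s : ℝ => ∫ y in (0 : ℝ)..1, |w (s, y)|) (𝓝[>] (0 : ℝ)) (𝓝 0) ∧
  Tendsto (fun s : ℝ => ∫ y in (0 : ℝ)..1, |w (s, y)|) (𝓝[<] (1 : ℝ)) (𝓝 0)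

lemma eventually_integrableOn_fst (hu : IntegrableOn u unitSquare) (a : ℝ) :
    ∀ᶠ y in essNhds a, IntegrableOn (fun x => u (x, y)) (Ioo 0 1) :=
  (integrableOn_unitSquare_iff.1 hu).prod_left_ae.filter_mono inf_le_right

lemma eventually_integrableOn_snd (hu : IntegrableOn u unitSquare) (a : ℝ) :
    ∀ᶠ x in essNhds a, IntegrableOn (fun y => u (x, y)) (Ioo 0 1) :=
  (integrableOn_unitSquare_iff.1 hu).prod_right_ae.filter_mono inf_le_right

lemma tendsto_integral_mul_of_tendsto_integral_abs_sub {ι : Type*} {l : Filter ι} {v : ι → ℝ → ℝ}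
    {a b : ℝ} (hab : a ≤ b) (hv : ∀ᶠ t in l, IntegrableOn (v t) (Ioo a b))
    (hh : IntegrableOn h (Ioo a b)) (hφ : Continuous φ)
    (hlim : Tendsto (fun t => ∫ x in a..b, |v t x - h x|) l (𝓝 0)) :
    Tendsto (fun t => ∫ x in Ioo a b, v t x * φ x) l (𝓝 (∫ x in Ioo a b, h x * φ x)) := by
  obtain ⟨C, hC⟩ := isCompact_Icc.exists_bound_of_continuousOn (s := Icc a b) hφ.continuousOn
  rw [tendsto_iff_dist_tendsto_zero]
  refine squeeze_zero' (Eventually.of_forall fun _ => dist_nonneg) ?_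
    (by simpa only [zero_mul] using hlim.mul_const C)
  filter_upwards [hv] with t hvt
  rw [Real.dist_eq, ← integral_sub (integrableOn_Ioo_mul hvt hφ) (integrableOn_Ioo_mul hh hφ),
    ← Real.norm_eq_abs, intervalIntegral_eq_setIntegral_Ioo hab, ← integral_mul_const]
  refine norm_integral_le_of_norm_le ((hvt.sub hh).abs.mul_const C) ?_
  filter_upwards [ae_restrict_mem measurableSet_Ioo] with x hx
  rw [← sub_mul, norm_mul]
  exact mul_le_mul_of_nonneg_left (hC x (Ioo_subset_Icc_self hx)) (abs_nonneg _)

lemma tendsto_integral_mul_of_tendsto_integral_abs {ι : Type*} {l : Filter ι} {v : ι → ℝ → ℝ}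
    {a b : ℝ} (hab : a ≤ b) (hv : ∀ᶠ t in l, IntegrableOn (v t) (Ioo a b)) (hφ : Continuous φ)
    (hlim : Tendsto (fun t => ∫ x in a..b, |v t x|) l (𝓝 0)) :
    Tendsto (fun t => ∫ x in Ioo a b, v t x * φ x) l (𝓝 0) := by
  simpa using tendsto_integral_mul_of_tendsto_integral_abs_sub (h := 0) hab hv
    (integrable_zero _ _ _) hφ (by simpa using hlim)

namespace HasBottomTrace

lemma tendsto_integral_mul_fderiv_tensor_snd (htr : HasBottomTrace u h)
    (hu : IntegrableOn u unitSquare) (hh : IntegrableOn h (Ioo 0 1)) (hφ : ContDiff ℝ 1 φ) :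
    Tendsto (fun n => ∫ z in unitSquare, u z * fderiv ℝ (tensor φ (edgeCutoff n)) z (0, 1)) atTop
      (𝓝 (∫ x in Ioo (0 : ℝ) 1, h x * φ x)) := by
  have hbot := tendsto_integral_mul_of_tendsto_integral_abs_sub zero_le_one
    (eventually_integrableOn_fst hu 0) hh hφ.continuous (htr.1.mono_left essNhds_zero_le)
  have htop := tendsto_integral_mul_of_tendsto_integral_abs zero_le_one
    (eventually_integrableOn_fst hu 1) hφ.continuous (htr.2.1.mono_left essNhds_one_le)
  have hlim := tendsto_integral_mul_deriv_mul_edgeCutoff (ψ := fun _ => 1)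
    (integrableOn_integral_mul_fst hu hφ.continuous) contDiff_const hbot htop
  simp only [one_mul, deriv_const, mul_zero, integral_zero, zero_add, mul_one, sub_zero] at hlim
  simpa only [integral_mul_fderiv_tensor_snd hu hφ (contDiff_edgeCutoff _)] using hlim

lemma tendsto_integral_mul_fderiv_tensor_fst (htr : HasBottomTrace u h)
    (hu : IntegrableOn u unitSquare) (hΦ : ContDiff ℝ 1 Φ) (hκ : ContDiff ℝ 1 κ) :
    Tendsto (fun n => ∫ z in unitSquare,
        u z * fderiv ℝ (tensor (fun x => Φ x * edgeCutoff n x) κ) z (1, 0)) atTop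
      (𝓝 (∫ z in unitSquare, u z * tensor (deriv Φ) κ z)) := by
  have hleft := tendsto_integral_mul_of_tendsto_integral_abs zero_le_one
    (eventually_integrableOn_snd hu 0) hκ.continuous (htr.2.2.1.mono_left essNhds_zero_le)
  have hright := tendsto_integral_mul_of_tendsto_integral_abs zero_le_one
    (eventually_integrableOn_snd hu 1) hκ.continuous (htr.2.2.2.mono_left essNhds_one_le)
  have hlim := tendsto_integral_mul_deriv_mul_edgeCutoff
    (integrableOn_integral_mul_snd hu hκ.continuous) hΦ hleft hright
  rw [zero_mul, zero_mul, sub_zero, add_zero,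
    integral_integral_mul_mul hu (hΦ.continuous_deriv le_rfl) hκ.continuous] at hlim
  simpa only [integral_mul_fderiv_tensor_fst hu (hΦ.mul (contDiff_edgeCutoff _)) hκ] using hlim

lemma tendsto_integral_mul_tensor_edgeKernel (htr : HasBottomTrace u h)
    (hu : IntegrableOn u unitSquare) (hh : IntegrableOn h (Ioo 0 1)) (hφ : Continuous φ) :
    Tendsto (fun n => ∫ z in unitSquare, u z * tensor φ (edgeKernel n) z) atTop
      (𝓝 (∫ x in Ioo (0 : ℝ) 1, h x * φ x)) := by
  have hbot := tendsto_integral_mul_of_tendsto_integral_abs_sub zero_le_one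
    (eventually_integrableOn_fst hu 0) hh hφ (htr.1.mono_left essNhds_zero_le)
  have hlim := tendsto_integral_mul_edgeKernel (integrableOn_integral_mul_fst hu hφ) hbot
  simpa only [integral_integral_mul_mul_symm hu hφ (contDiff_edgeKernel _).continuous] using hlim

lemma sq_integral_fderiv_add_sq_integral_mul_le (htr : HasBottomTrace u h)
    (hu : IsBVOn unitSquare u) (hh : IntegrableOn h (Ioo 0 1)) (hξ : IsTestFunction unitSquare ξ)
    (hξ1 : ∀ z, |ξ z| ≤ 1) (hφ : IsTestFunction (Ioo 0 1) φ) (hφ1 : ∀ x, |φ x| ≤ 1) :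
    (∫ z in unitSquare, u z * fderiv ℝ ξ z (1, 0)) ^ 2 + (∫ x in Ioo (0 : ℝ) 1, h x * φ x) ^ 2
      ≤ totalVar unitSquare u ^ 2 := by
  refine le_of_tendsto
    (((htr.tendsto_integral_mul_fderiv_tensor_snd hu.1 hh hφ.contDiff).pow 2).const_add _)
    (Eventually.of_forall fun n => ?_)
  refine sq_integral_fderiv_add_sq_integral_fderiv_le hu hξ
    (hφ.tensor (isTestFunction_edgeCutoff n)) hξ1 fun z => ?_
  rw [tensor, abs_mul]
  exact mul_le_one₀ (hφ1 _) (abs_nonneg _) (abs_edgeCutoff_le_one n _)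

lemma sq_integral_fderiv_add_sq_integral_abs_le (htr : HasBottomTrace u h)
    (hu : IsBVOn unitSquare u) (hh : IntegrableOn h (Ioo 0 1)) (hξ : IsTestFunction unitSquare ξ)
    (hξ1 : ∀ z, |ξ z| ≤ 1) :
    (∫ z in unitSquare, u z * fderiv ℝ ξ z (1, 0)) ^ 2 + (∫ x in Ioo (0 : ℝ) 1, |h x|) ^ 2
      ≤ totalVar unitSquare u ^ 2 := by
  set A := ∫ z in unitSquare, u z * fderiv ℝ ξ z (1, 0)
  have hpyth := fun φ => htr.sq_integral_fderiv_add_sq_integral_mul_le (φ := φ) hu hh hξ hξ1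
  have hA : 0 ≤ totalVar unitSquare u ^ 2 - A ^ 2 := by
    linarith [hpyth _ (isTestFunction_edgeCutoff 0) (abs_edgeCutoff_le_one 0),
      sq_nonneg (∫ x in Ioo (0 : ℝ) 1, h x * edgeCutoff 0 x)]
  have hh1 : ∫ x in Ioo (0 : ℝ) 1, |h x| ≤ √(totalVar unitSquare u ^ 2 - A ^ 2) :=
    integral_abs_le_of_forall_isTestFunction hh fun φ hφ hφ1 =>
      Real.le_sqrt_of_sq_le (by linarith [hpyth φ hφ hφ1])
  have hsq := pow_le_pow_left₀ (integral_nonneg fun x => abs_nonneg (h x)) hh1 2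
  rw [Real.sq_sqrt hA] at hsq
  linarith

lemma integral_fderiv_eq_zero_of_totalVar_le (htr : HasBottomTrace u h)
    (hu : IsBVOn unitSquare u) (hh : IntegrableOn h (Ioo 0 1))
    (hle : totalVar unitSquare u ≤ ∫ x in Ioo (0 : ℝ) 1, |h x|)
    (hξ : IsTestFunction unitSquare ξ) :
    ∫ z in unitSquare, u z * fderiv ℝ ξ z (1, 0) = 0 := by
  obtain ⟨C, hC0, hC⟩ := hξ.exists_abs_le
  have hscaled := htr.sq_integral_fderiv_add_sq_integral_abs_le hu hh
    (hξ.mul_left (contDiff_const (c := C⁻¹))) fun z => by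
      rw [abs_mul, abs_inv, abs_of_pos hC0, inv_mul_le_one₀ hC0]
      exact hC z
  have hTV := pow_le_pow_left₀ (totalVar_nonneg unitSquare u) hle 2
  rw [integral_mul_fderiv_const_mul hξ] at hscaled
  have hzero : (C⁻¹ * ∫ z in unitSquare, u z * fderiv ℝ ξ z (1, 0)) ^ 2 ≤ 0 := by linarith
  exact (mul_eq_zero.1 (sq_nonpos_iff _ |>.1 hzero)).resolve_left (inv_ne_zero hC0.ne')

lemma integral_mul_deriv_eq_zero_of_totalVar_le (htr : HasBottomTrace u h)
    (hu : IsBVOn unitSquare u) (hh : IntegrableOn h (Ioo 0 1))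
    (hle : totalVar unitSquare u ≤ ∫ x in Ioo (0 : ℝ) 1, |h x|) (hΦ : ContDiff ℝ 1 Φ) :
    ∫ x in Ioo (0 : ℝ) 1, h x * deriv Φ x = 0 := by
  have hslab : ∀ m, ∫ z in unitSquare, u z * tensor (deriv Φ) (edgeKernel m) z = 0 := fun m => by
    refine tendsto_nhds_unique (htr.tendsto_integral_mul_fderiv_tensor_fst hu.1 hΦ
      (contDiff_edgeKernel m)) (tendsto_const_nhds.congr fun n => ?_)
    exact (htr.integral_fderiv_eq_zero_of_totalVar_le hu hh hle
      (((isTestFunction_edgeCutoff n).mul_left hΦ).tensor (isTestFunction_edgeKernel m))).symm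
  exact tendsto_nhds_unique
    (htr.tendsto_integral_mul_tensor_edgeKernel hu.1 hh (hΦ.continuous_deriv le_rfl))
    (tendsto_const_nhds.congr fun m => (hslab m).symm)

lemma integral_abs_lt_totalVar (htr : HasBottomTrace u h) (hu : IsBVOn unitSquare u)
    (hh : IntegrableOn h (Ioo 0 1)) (hpos : 0 < ∫ x in Ioo (0 : ℝ) 1, |h x|) :
    ∫ x in Ioo (0 : ℝ) 1, |h x| < totalVar unitSquare u := by
  by_contra! hle
  refine hpos.not_ge (integral_abs_le_of_forall_isTestFunction hh fun φ hφ _ => ?_)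
  have hderiv : deriv (fun x => ∫ t in (0 : ℝ)..x, φ t) = φ :=
    funext fun x => hφ.continuous.deriv_integral φ 0 x
  have hΦ : ContDiff ℝ 1 fun x => ∫ t in (0 : ℝ)..x, φ t := by
    rw [contDiff_one_iff_deriv, hderiv]
    exact ⟨fun x => (hφ.continuous.integral_hasStrictDerivAt 0 x).hasDerivAt.differentiableAt,
      hφ.continuous⟩
  have hzero := htr.integral_mul_deriv_eq_zero_of_totalVar_le hu hh hle hΦ
  rw [hderiv] at hzero
  exact hzero.le

end HasBottomTrace

end Traces

section Series

variable {X E ι : Type*} [MeasurableSpace X] {μ : Measure X} [NormedAddCommGroup E] {f : ι → X → E}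

lemma tsum_lintegral_enorm_ne_top (hf : ∀ i, Integrable (f i) μ)
    (hs : Summable fun i => ∫ x, ‖f i x‖ ∂μ) : ∑' i, ∫⁻ x, ‖f i x‖ₑ ∂μ ≠ ⊤ := by
  simp only [← ofReal_integral_norm_eq_lintegral_enorm (hf _)]
  exact hs.tsum_ofReal_ne_top

variable [Countable ι]

lemma ae_summable_norm_of_summable_integral_norm (hf : ∀ i, Integrable (f i) μ)
    (hs : Summable fun i => ∫ x, ‖f i x‖ ∂μ) : ∀ᵐ x ∂μ, Summable fun i => ‖f i x‖ := by
  refine summable_norm_of_tsum_eLpNorm_ne_top le_rfl (fun i => (hf i).1) ?_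
  simpa only [eLpNorm_one_eq_lintegral_enorm] using tsum_lintegral_enorm_ne_top hf hs

variable [CompleteSpace E]

lemma integrable_tsum_of_summable_integral_norm (hf : ∀ i, Integrable (f i) μ)
    (hs : Summable fun i => ∫ x, ‖f i x‖ ∂μ) : Integrable (fun x => ∑' i, f i x) μ := by
  refine ⟨?_, lt_of_le_of_lt (lintegral_mono fun x => enorm_tsum_le_tsum_enorm) ?_⟩
  · refine aestronglyMeasurable_of_tendsto_ae (f := fun s x => ∑ i ∈ s, f i x) atTop
      (fun s => Finset.aestronglyMeasurable_fun_sum s fun i _ => (hf i).1) ?_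
    filter_upwards [ae_summable_norm_of_summable_integral_norm hf hs] with x hx
    exact hx.of_norm.hasSum
  · rw [lintegral_tsum fun i => (hf i).1.enorm]
    exact (tsum_lintegral_enorm_ne_top hf hs).lt_top

lemma integral_norm_tsum_le (hf : ∀ i, Integrable (f i) μ)
    (hs : Summable fun i => ∫ x, ‖f i x‖ ∂μ) :
    ∫ x, ‖∑' i, f i x‖ ∂μ ≤ ∑' i, ∫ x, ‖f i x‖ ∂μ := by
  have hs' : Summable fun i => ∫ x, ‖‖f i x‖‖ ∂μ := by simpa only [norm_norm] using hs
  rw [integral_tsum_of_summable_integral_norm (fun i => (hf i).norm) hs']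
  refine integral_mono_ae (integrable_tsum_of_summable_integral_norm hf hs).norm
    (integrable_tsum_of_summable_integral_norm (fun i => (hf i).norm) hs') ?_
  filter_upwards [ae_summable_norm_of_summable_integral_norm hf hs] with x hx
  exact norm_tsum_le_tsum_norm hx

end Series

section Approximation

variable {h : ℝ → ℝ} {ε : ℝ}

lemma exists_seq_isTestFunction_tsum_le (hh : IntegrableOn h (Ioo 0 1)) (hε : 0 < ε) :
    ∃ f : ℕ → ℝ → ℝ, f 0 = 0 ∧ (∀ k, IsTestFunction (Ioo 0 1) (f k)) ∧
      (Summable fun k => ∫ x in Ioo (0 : ℝ) 1, |f (k + 1) x - h x|) ∧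
      ∑' k, ∫ x in Ioo (0 : ℝ) 1, |f (k + 1) x - h x| ≤ ε := by
  have happrox : ∀ k : ℕ, ∃ f, IsTestFunction (Ioo 0 1) f ∧
      ∫ x in Ioo (0 : ℝ) 1, |f x - h x| ≤ ε / 2 / 2 ^ k := fun k =>
    exists_isTestFunction_integral_abs_sub_le hh (by positivity)
  choose f hf hfh using happrox
  have hsum : Summable fun k => ∫ x in Ioo (0 : ℝ) 1, |f k x - h x| :=
    .of_nonneg_of_le (fun k => integral_nonneg fun x => abs_nonneg _) hfh
      (summable_geometric_two' ε)
  have hle := (hsum.tsum_le_tsum hfh (summable_geometric_two' ε)).trans_eq (tsum_geometric_two' ε)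
  let F : ℕ → ℝ → ℝ
    | 0 => 0
    | k + 1 => f k
  have hF : ∀ k, IsTestFunction (Ioo 0 1) (F k)
    | 0 => .zero _
    | k + 1 => hf k
  exact ⟨F, rfl, hF, hsum, hle⟩

lemma hasSum_sub_of_summable_abs_sub {a : ℕ → ℝ} {b : ℝ} (hab : Summable fun k => |a k - b|) :
    HasSum (fun k => a (k + 1) - a k) (b - a 0) := by
  have hr : HasSum (fun k => a k - b) _ := (Summable.of_abs hab).hasSum
  simpa using ((hasSum_nat_add_iff' 1).2 hr).sub hr

lemma exists_isTestFunction_tsum_eq (hh : IntegrableOn h (Ioo 0 1)) (hε : 0 < ε) :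
    ∃ g : ℕ → ℝ → ℝ, (∀ k, IsTestFunction (Ioo 0 1) (g k)) ∧
      (Summable fun k => ∫ x in Ioo (0 : ℝ) 1, |g k x|) ∧
      ∑' k, ∫ x in Ioo (0 : ℝ) 1, |g k x| ≤ (∫ x in Ioo (0 : ℝ) 1, |h x|) + ε ∧
      ∀ᵐ x ∂volume.restrict (Ioo (0 : ℝ) 1), ∑' k, g k x = h x := by
  obtain ⟨f, hf0, hf, hsucc, hsucc_le⟩ := exists_seq_isTestFunction_tsum_le hh (half_pos hε)
  have hsum : Summable fun k => ∫ x in Ioo (0 : ℝ) 1, |f k x - h x| :=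
    (summable_nat_add_iff 1).1 hsucc
  have hg : ∀ k, IsTestFunction (Ioo 0 1) fun x => f (k + 1) x - f k x := fun k =>
    (hf _).sub (hf k)
  have hr : ∀ k, IntegrableOn (fun x => f k x - h x) (Ioo 0 1) := fun k =>
    (hf k).integrable.integrableOn.sub hh
  have hgr : ∀ k, ∫ x in Ioo (0 : ℝ) 1, |f (k + 1) x - f k x| ≤
      (∫ x in Ioo (0 : ℝ) 1, |f (k + 1) x - h x|) + ∫ x in Ioo (0 : ℝ) 1, |f k x - h x| :=
    fun k => calc
      _ ≤ ∫ x in Ioo (0 : ℝ) 1, (|f (k + 1) x - h x| + |f k x - h x|) :=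
        integral_mono (hg k).integrable.integrableOn.abs ((hr _).abs.add (hr _).abs) fun x => by
          simpa only [abs_sub_comm] using abs_sub_le (f (k + 1) x) (h x) (f k x)
      _ = _ := integral_add (hr _).abs (hr _).abs
  have hgsum : Summable fun k => ∫ x in Ioo (0 : ℝ) 1, |f (k + 1) x - f k x| :=
    .of_nonneg_of_le (fun k => integral_nonneg fun x => abs_nonneg _) hgr (hsucc.add hsum)
  refine ⟨fun k x => f (k + 1) x - f k x, hg, hgsum, ?_, ?_⟩
  · have htotal := (hgsum.tsum_le_tsum hgr (hsucc.add hsum)).trans_eq (hsucc.tsum_add hsum)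
    rw [hsum.tsum_eq_zero_add] at htotal
    simp only [hf0, Pi.zero_apply, zero_sub, abs_neg] at htotal
    linarith
  · filter_upwards [ae_summable_norm_of_summable_integral_norm hr hsum] with x hx
    simpa [hf0] using (hasSum_sub_of_summable_abs_sub hx).tsum_eq

end Approximation

section Layers

variable {g χ φ ψ : ℝ → ℝ} {ξ : ℝ × ℝ → ℝ} {t : ℝ}

lemma integrableOn_tensor (hφ : IntegrableOn φ (Ioo 0 1)) (hψ : IntegrableOn ψ (Ioo 0 1)) :
    IntegrableOn (tensor φ ψ) unitSquare :=
  integrableOn_unitSquare_iff.2 (hφ.mul_prod hψ)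

lemma integral_abs_tensor (φ ψ : ℝ → ℝ) : ∫ z in unitSquare, |tensor φ ψ z|
    = (∫ x in Ioo (0 : ℝ) 1, |φ x|) * ∫ y in Ioo (0 : ℝ) 1, |ψ y| := by
  simp only [tensor, abs_mul]
  rw [volume_restrict_unitSquare]
  exact integral_prod_mul (fun x => |φ x|) fun y => |ψ y|

lemma IsTestFunction.hasDerivAt_fst {Ω : Set (ℝ × ℝ)} (hξ : IsTestFunction Ω ξ) (x y : ℝ) :
    HasDerivAt (fun x => ξ (x, y)) (fderiv ℝ ξ (x, y) (1, 0)) x :=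
  (hξ.differentiableAt (x, y)).hasFDerivAt.comp_hasDerivAt x
    ((hasDerivAt_id x).prodMk (hasDerivAt_const x y))

lemma IsTestFunction.hasDerivAt_snd {Ω : Set (ℝ × ℝ)} (hξ : IsTestFunction Ω ξ) (x y : ℝ) :
    HasDerivAt (fun y => ξ (x, y)) (fderiv ℝ ξ (x, y) (0, 1)) y :=
  (hξ.differentiableAt (x, y)).hasFDerivAt.comp_hasDerivAt y
    ((hasDerivAt_const y x).prodMk (hasDerivAt_id y))

lemma abs_integral_mul_fderiv_fst_le {Ω : Set (ℝ × ℝ)} (hg : IsTestFunction (Ioo 0 1) g)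
    (hξ : IsTestFunction Ω ξ) (hξ1 : ∀ z, |ξ z| ≤ 1) (y : ℝ) :
    |∫ x in Ioo (0 : ℝ) 1, g x * fderiv ℝ ξ (x, y) (1, 0)|
      ≤ ∫ x in Ioo (0 : ℝ) 1, |deriv g x| := by
  have hparts := intervalIntegral.integral_mul_deriv_eq_deriv_mul (a := 0) (b := 1)
    (fun x _ => (hg.differentiableAt x).hasDerivAt) (fun x _ => hξ.hasDerivAt_fst x y)
    (hg.continuous_deriv.intervalIntegrable _ _)
    (((hξ.continuous_fderiv_apply (1, 0)).comp (.prodMk_left y)).intervalIntegrable _ _)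
  rw [hg.eq_zero_of_notMem left_notMem_Ioo, hg.eq_zero_of_notMem right_notMem_Ioo, zero_mul,
    zero_mul, sub_zero, zero_sub, intervalIntegral_eq_setIntegral_Ioo zero_le_one,
    intervalIntegral_eq_setIntegral_Ioo zero_le_one] at hparts
  have hg' : IntegrableOn (deriv g) (Ioo 0 1) :=
    (hg.continuous_deriv.integrable_of_hasCompactSupport hg.hasCompactSupport.deriv).integrableOn
  rw [hparts, abs_neg, ← Real.norm_eq_abs]
  refine norm_integral_le_of_norm_le hg'.abs (ae_of_all _ fun x => ?_)
  rw [norm_mul]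
  exact mul_le_of_le_one_right (abs_nonneg _) (hξ1 _)

lemma integral_tensor_mul_fderiv_fst_le (hg : IsTestFunction (Ioo 0 1) g)
    (hχ : IntegrableOn χ (Ioo 0 1)) (hξ : IsTestFunction unitSquare ξ) (hξ1 : ∀ z, |ξ z| ≤ 1) :
    ∫ z in unitSquare, tensor g χ z * fderiv ℝ ξ z (1, 0)
      ≤ (∫ y in Ioo (0 : ℝ) 1, |χ y|) * ∫ x in Ioo (0 : ℝ) 1, |deriv g x| := by
  have hinner : ∀ y, ∫ x in Ioo (0 : ℝ) 1, tensor g χ (x, y) * fderiv ℝ ξ (x, y) (1, 0)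
      = χ y * ∫ x in Ioo (0 : ℝ) 1, g x * fderiv ℝ ξ (x, y) (1, 0) := fun y => by
    rw [← integral_const_mul]
    simp only [tensor, mul_left_comm, mul_assoc]
  rw [integral_unitSquare_symm
    (hξ.integrable_mul_fderiv (integrableOn_tensor hg.integrable.integrableOn hχ) _),
    ← integral_mul_const]
  simp only [hinner]
  refine (Real.le_norm_self _).trans
    (norm_integral_le_of_norm_le (hχ.abs.mul_const _) (ae_of_all _ fun y => ?_))
  rw [norm_mul]
  exact mul_le_mul_of_nonneg_left (abs_integral_mul_fderiv_fst_le hg hξ hξ1 y) (abs_nonneg _)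

/-- The horizontal layer of height `t` with profile `g`, equal to `g x` at the points `(x, y)` with
`y < t` and to `0` elsewhere; layers are the pieces from which functions with a given trace on the
bottom side are assembled. -/
def layer (g : ℝ → ℝ) (t : ℝ) : ℝ × ℝ → ℝ := tensor g ((Iio t).indicator 1)

lemma layer_apply (g : ℝ → ℝ) (t x y : ℝ) : layer g t (x, y) = g x * (Iio t).indicator 1 y := rfl

lemma layer_eq_sub_indicator_Ici (g : ℝ → ℝ) (t x y : ℝ) :
    layer g t (x, y) = g x - (Ici t).indicator (fun _ => g x) y := by
  rcases lt_or_ge y t with hy | hy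
  · rw [layer_apply, indicator_of_mem (mem_Iio.2 hy), indicator_of_notMem (notMem_Ici.2 hy),
      Pi.one_apply, mul_one, sub_zero]
  · rw [layer_apply, indicator_of_notMem (notMem_Iio.2 hy), indicator_of_mem (mem_Ici.2 hy),
      mul_zero, sub_self]

lemma integrableOn_indicator_one {s : Set ℝ} (hs : MeasurableSet s) (a b : ℝ) :
    IntegrableOn (s.indicator (1 : ℝ → ℝ)) (Ioo a b) :=
  (integrableOn_const measure_Ioo_lt_top.ne).indicator hs

lemma integrableOn_layer (hg : IsTestFunction (Ioo 0 1) g) (t : ℝ) :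
    IntegrableOn (layer g t) unitSquare :=
  integrableOn_tensor hg.integrable.integrableOn (integrableOn_indicator_one measurableSet_Iio _ _)

lemma integral_abs_indicator_Iio (ht : t ∈ Icc (0 : ℝ) 1) :
    ∫ y in Ioo (0 : ℝ) 1, |(Iio t).indicator (1 : ℝ → ℝ) y| = t := by
  have habs : ∀ y, |(Iio t).indicator (1 : ℝ → ℝ) y| = (Iio t).indicator 1 y := fun y =>
    abs_of_nonneg (indicator_nonneg (fun _ _ => zero_le_one) y)
  simp only [habs]
  rw [integral_indicator_one measurableSet_Iio, measureReal_restrict_apply measurableSet_Iio,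
    inter_comm, Ioo_inter_Iio, min_eq_right ht.2, Real.volume_real_Ioo_of_le ht.1, sub_zero]

lemma integral_layer_mul_fderiv_snd (hξ : IsTestFunction unitSquare ξ) (ht : t ∈ Icc (0 : ℝ) 1)
    (g : ℝ → ℝ) (x : ℝ) :
    ∫ y in Ioo (0 : ℝ) 1, layer g t (x, y) * fderiv ℝ ξ (x, y) (0, 1) = g x * ξ (x, t) := by
  have hbottom : ξ (x, 0) = 0 := hξ.eq_zero_of_notMem fun h => left_notMem_Ioo h.2
  have hlayer : ∀ y, layer g t (x, y) * fderiv ℝ ξ (x, y) (0, 1)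
      = g x * (Iio t).indicator (fun y => fderiv ℝ ξ (x, y) (0, 1)) y := fun y => by
    by_cases hy : y ∈ Iio t <;> simp [layer_apply, hy]
  simp only [hlayer]
  rw [integral_const_mul, setIntegral_indicator measurableSet_Iio, Ioo_inter_Iio,
    min_eq_right ht.2, ← intervalIntegral_eq_setIntegral_Ioo ht.1,
    intervalIntegral.integral_eq_sub_of_hasDerivAt (fun y _ => hξ.hasDerivAt_snd x y)
      (((hξ.continuous_fderiv_apply (0, 1)).comp (.prodMk_right x)).intervalIntegrable _ _),
    hbottom, sub_zero]

lemma integral_layer_mul_fderiv_snd_le (hg : IsTestFunction (Ioo 0 1) g)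
    (ht : t ∈ Icc (0 : ℝ) 1) (hξ : IsTestFunction unitSquare ξ) (hξ1 : ∀ z, |ξ z| ≤ 1) :
    ∫ z in unitSquare, layer g t z * fderiv ℝ ξ z (0, 1) ≤ ∫ x in Ioo (0 : ℝ) 1, |g x| := by
  rw [integral_unitSquare (hξ.integrable_mul_fderiv (integrableOn_layer hg t) _)]
  simp only [integral_layer_mul_fderiv_snd hξ ht]
  refine (Real.le_norm_self _).trans
    (norm_integral_le_of_norm_le hg.integrable.integrableOn.abs (ae_of_all _ fun x => ?_))
  rw [norm_mul]
  exact mul_le_of_le_one_right (abs_nonneg _) (hξ1 _)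

lemma mem_upperBounds_varSet_layer (hg : IsTestFunction (Ioo 0 1) g) (ht : t ∈ Icc (0 : ℝ) 1) :
    (∫ x in Ioo (0 : ℝ) 1, |g x|) + t * ∫ x in Ioo (0 : ℝ) 1, |deriv g x|
      ∈ upperBounds (varSet unitSquare (layer g t)) := by
  intro v hv
  obtain ⟨ζ, hζ, rfl⟩ := mem_varSet_iff.1 hv
  have hfst := integral_tensor_mul_fderiv_fst_le hg
    (integrableOn_indicator_one (measurableSet_Iio (a := t)) 0 1) hζ.fst hζ.abs_fst_le_one
  rw [integral_abs_indicator_Iio ht] at hfst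
  rw [hζ.integral_mul_divergence (integrableOn_layer hg t), add_comm]
  exact add_le_add (integral_layer_mul_fderiv_snd_le hg ht hζ.snd hζ.abs_snd_le_one) hfst

end Layers

section CountableSums

variable {Ω : Set (ℝ × ℝ)} {ζ : ℝ × ℝ → ℝ × ℝ} {f : ℕ → ℝ × ℝ → ℝ} {c : ℕ → ℝ}

namespace IsAdmissibleField

lemma continuous_divergence (hζ : IsAdmissibleField Ω ζ) : Continuous (divergence ζ) := by
  rw [hζ.divergence_eq]
  exact (hζ.fst.continuous_fderiv_apply _).add (hζ.snd.continuous_fderiv_apply _)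

lemma hasCompactSupport_divergence (hζ : IsAdmissibleField Ω ζ) :
    HasCompactSupport (divergence ζ) := by
  rw [hζ.divergence_eq]
  exact (hζ.fst.hasCompactSupport.fderiv_apply ℝ _).add
    (hζ.snd.hasCompactSupport.fderiv_apply ℝ _)

end IsAdmissibleField

lemma tsum_mem_upperBounds_varSet (hf : ∀ k, IntegrableOn (f k) Ω)
    (hfsum : Summable fun k => ∫ z in Ω, |f k z|) (hc : Summable c)
    (hfc : ∀ k, c k ∈ upperBounds (varSet Ω (f k))) :
    ∑' k, c k ∈ upperBounds (varSet Ω fun z => ∑' k, f k z) := by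
  intro v hv
  obtain ⟨ζ, hζ, rfl⟩ := mem_varSet_iff.1 hv
  obtain ⟨C, hC⟩ := hζ.hasCompactSupport_divergence.exists_bound_of_continuous
    hζ.continuous_divergence
  have hint : ∀ k, IntegrableOn (fun z => f k z * divergence ζ z) Ω := fun k =>
    integrable_mul_of_hasCompactSupport (hf k) hζ.continuous_divergence
      hζ.hasCompactSupport_divergence
  have hle : ∀ k, ∫ z in Ω, ‖f k z * divergence ζ z‖ ≤ (∫ z in Ω, |f k z|) * C := fun k => by
    rw [← integral_mul_const]
    refine integral_mono (hint k).norm ((hf k).abs.mul_const C) fun z => ?_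
    beta_reduce
    rw [norm_mul]
    exact mul_le_mul_of_nonneg_left (hC z) (abs_nonneg _)
  have hsum := hasSum_integral_of_summable_integral_norm hint
    (.of_nonneg_of_le (fun k => integral_nonneg fun z => norm_nonneg _) hle (hfsum.mul_right C))
  simp only [tsum_mul_right] at hsum
  exact hasSum_le (fun k => hfc k (mem_varSet_iff.2 ⟨ζ, hζ, rfl⟩)) hsum hc.hasSum

end CountableSums

section Competitors

variable {g : ℕ → ℝ → ℝ} {t a : ℕ → ℝ} {h : ℝ → ℝ} {ε : ℝ}

lemma integral_abs_layer {g : ℝ → ℝ} {t : ℝ} (ht : t ∈ Icc (0 : ℝ) 1) :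
    ∫ z in unitSquare, |layer g t z| = (∫ x in Ioo (0 : ℝ) 1, |g x|) * t := by
  rw [layer, integral_abs_tensor, integral_abs_indicator_Iio ht]

lemma summable_integral_abs_layer (ht : ∀ k, t k ∈ Icc (0 : ℝ) 1)
    (hgsum : Summable fun k => ∫ x in Ioo (0 : ℝ) 1, |g k x|) :
    Summable fun k => ∫ z in unitSquare, |layer (g k) (t k) z| := by
  refine .of_nonneg_of_le (fun k => integral_nonneg fun z => abs_nonneg _) (fun k => ?_) hgsum
  rw [integral_abs_layer (ht k)]
  exact mul_le_of_le_one_right (integral_nonneg fun _ => abs_nonneg _) (ht k).2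

lemma integral_abs_tsum_layer_sub_le (hg : ∀ k, IsTestFunction (Ioo 0 1) (g k))
    (hgsum : Summable fun k => ∫ x in Ioo (0 : ℝ) 1, |g k x|)
    (hgh : ∀ᵐ x ∂volume.restrict (Ioo (0 : ℝ) 1), ∑' k, g k x = h x) (t : ℕ → ℝ) (y : ℝ) :
    ∫ x in Ioo (0 : ℝ) 1, |(∑' k, layer (g k) (t k) (x, y)) - h x|
      ≤ ∑' k, (Ici (t k)).indicator (fun _ => ∫ x in Ioo (0 : ℝ) 1, |g k x|) y := by
  have hgi : ∀ k, IntegrableOn (g k) (Ioo 0 1) := fun k => (hg k).integrable.integrableOn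
  have hint : ∀ k, IntegrableOn (fun x => (Ici (t k)).indicator (fun _ => g k x) y) (Ioo 0 1) :=
    fun k => by by_cases hy : y ∈ Ici (t k) <;> simp [hy, hgi k]
  have habs : ∀ k, ∫ x in Ioo (0 : ℝ) 1, ‖(Ici (t k)).indicator (fun _ => g k x) y‖
      = (Ici (t k)).indicator (fun _ => ∫ x in Ioo (0 : ℝ) 1, |g k x|) y := fun k => by
    by_cases hy : y ∈ Ici (t k) <;> simp [hy]
  have hsum : Summable fun k => ∫ x in Ioo (0 : ℝ) 1, ‖(Ici (t k)).indicator (fun _ => g k x) y‖ :=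
    .of_nonneg_of_le (fun k => integral_nonneg fun x => norm_nonneg _) (fun k => by
      rw [habs]
      exact indicator_le_self' (fun _ _ => integral_nonneg fun _ => abs_nonneg _) y) hgsum
  calc _ = ∫ x in Ioo (0 : ℝ) 1, ‖∑' k, (Ici (t k)).indicator (fun _ => g k x) y‖ := by
        refine integral_congr_ae ?_
        filter_upwards [hgh, ae_summable_norm_of_summable_integral_norm hgi hgsum,
          ae_summable_norm_of_summable_integral_norm hint hsum] with x hx hgx hrx
        simp only [layer_eq_sub_indicator_Ici]
        rw [hgx.of_norm.tsum_sub hrx.of_norm, hx, sub_sub_cancel_left, abs_neg, Real.norm_eq_abs]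
    _ ≤ _ := (integral_norm_tsum_le hint hsum).trans_eq (tsum_congr habs)

lemma tendsto_integral_abs_tsum_layer_sub (hg : ∀ k, IsTestFunction (Ioo 0 1) (g k))
    (hgsum : Summable fun k => ∫ x in Ioo (0 : ℝ) 1, |g k x|)
    (hgh : ∀ᵐ x ∂volume.restrict (Ioo (0 : ℝ) 1), ∑' k, g k x = h x) (ht : ∀ k, 0 < t k) :
    Tendsto (fun y => ∫ x in (0 : ℝ)..1, |(∑' k, layer (g k) (t k) (x, y)) - h x|) (𝓝[>] 0)
      (𝓝 0) := by
  have hnn : ∀ k, 0 ≤ ∫ x in Ioo (0 : ℝ) 1, |g k x| := fun k =>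
    integral_nonneg fun x => abs_nonneg _
  have hlim : Tendsto
      (fun y => ∑' k, (Ici (t k)).indicator (fun _ => ∫ x in Ioo (0 : ℝ) 1, |g k x|) y)
      (𝓝[>] 0) (𝓝 (∑' _ : ℕ, (0 : ℝ))) := by
    refine tendsto_tsum_of_dominated_convergence hgsum (fun k => ?_)
      (Eventually.of_forall fun y k => ?_)
    · refine tendsto_const_nhds.congr' ?_
      filter_upwards [Ioo_mem_nhdsGT (ht k)] with y hy
      exact (indicator_of_notMem (notMem_Ici.2 hy.2) _).symm
    · exact (norm_indicator_le_norm_self _ y).trans_eq (Real.norm_of_nonneg (hnn k))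
  rw [tsum_zero] at hlim
  simp only [intervalIntegral_eq_setIntegral_Ioo zero_le_one]
  exact squeeze_zero (fun y => integral_nonneg fun x => abs_nonneg _)
    (integral_abs_tsum_layer_sub_le hg hgsum hgh t) hlim

lemma tendsto_integral_abs_tsum_layer_top (g : ℕ → ℝ → ℝ) (ht : ∀ k, t k ≤ 1 / 2) :
    Tendsto (fun y => ∫ x in (0 : ℝ)..1, |∑' k, layer (g k) (t k) (x, y)|) (𝓝[<] 1) (𝓝 0) := by
  refine tendsto_const_nhds.congr' ?_
  filter_upwards [Ioo_mem_nhdsLT one_half_lt_one] with y hy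
  have hlayer : ∀ k x, layer (g k) (t k) (x, y) = 0 := fun k x => by
    rw [layer_apply, indicator_of_notMem (notMem_Iio.2 ((ht k).trans hy.1.le)), mul_zero]
  simp only [hlayer, tsum_zero, abs_zero, intervalIntegral.integral_zero]

lemma integral_abs_tsum_layer_side_le (ht : ∀ k, t k ∈ Icc (0 : ℝ) 1) (s : ℝ)
    (hs : Summable fun k => t k * |g k s|) :
    ∫ y in Ioo (0 : ℝ) 1, |∑' k, layer (g k) (t k) (s, y)| ≤ ∑' k, t k * |g k s| := by
  have hnorm : ∀ k, ∫ y in Ioo (0 : ℝ) 1, ‖layer (g k) (t k) (s, y)‖ = t k * |g k s| := fun k => by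
    simp only [layer_apply, norm_mul, Real.norm_eq_abs]
    rw [integral_const_mul, integral_abs_indicator_Iio (ht k), mul_comm]
  have hint : ∀ k, IntegrableOn (fun y => layer (g k) (t k) (s, y)) (Ioo 0 1) := fun k =>
    (integrableOn_indicator_one measurableSet_Iio 0 1).const_mul (g k s)
  simpa only [hnorm, Real.norm_eq_abs (∑' _, _)] using
    integral_norm_tsum_le hint (by simpa only [hnorm] using hs)

lemma tendsto_integral_abs_tsum_layer_side {l : Filter ℝ} {b : ℝ} (hl : l ≤ 𝓝 b)
    (hb : b ∉ Ioo (0 : ℝ) 1) (hg : ∀ k, IsTestFunction (Ioo 0 1) (g k))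
    (ht : ∀ k, t k ∈ Icc (0 : ℝ) 1) (ha : Summable a) (hta : ∀ k s, t k * |g k s| ≤ a k) :
    Tendsto (fun s => ∫ y in (0 : ℝ)..1, |∑' k, layer (g k) (t k) (s, y)|) l (𝓝 0) := by
  have hnn : ∀ k s, 0 ≤ t k * |g k s| := fun k s => mul_nonneg (ht k).1 (abs_nonneg _)
  have hlim : Tendsto (fun s => ∑' k, t k * |g k s|) l (𝓝 (∑' k, t k * |g k b|)) :=
    tendsto_tsum_of_dominated_convergence ha
      (fun k => (((hg k).continuous.abs.tendsto b).const_mul (t k)).mono_left hl)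
      (Eventually.of_forall fun s k => (Real.norm_of_nonneg (hnn k s)).trans_le (hta k s))
  simp only [(hg _).eq_zero_of_notMem hb, abs_zero, mul_zero, tsum_zero] at hlim
  simp only [intervalIntegral_eq_setIntegral_Ioo zero_le_one]
  exact squeeze_zero (fun s => integral_nonneg fun y => abs_nonneg _) (fun s =>
    integral_abs_tsum_layer_side_le ht s (.of_nonneg_of_le (hnn · s) (hta · s) ha)) hlim

lemma exists_heights (hg : ∀ k, IsTestFunction (Ioo 0 1) (g k)) (ha : ∀ k, 0 < a k) :
    ∃ t : ℕ → ℝ, (∀ k, t k ∈ Ioc (0 : ℝ) (1 / 2)) ∧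
      (∀ k, t k * (∫ x in Ioo (0 : ℝ) 1, |deriv (g k) x|) ≤ a k) ∧
      ∀ k x, t k * |g k x| ≤ a k := by
  choose C _ hC using fun k => (hg k).exists_abs_le
  have hsmall : ∀ k c, ∀ᶠ t : ℝ in 𝓝[>] 0, t * c ≤ a k := fun k c =>
    (((continuous_mul_const c).tendsto' 0 0 (zero_mul c)).eventually_le_const (ha k)).filter_mono
      nhdsWithin_le_nhds
  have hexists : ∀ k, ∃ t ∈ Ioc (0 : ℝ) (1 / 2),
      t * (∫ x in Ioo (0 : ℝ) 1, |deriv (g k) x|) ≤ a k ∧ t * C k ≤ a k := fun k =>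
    ((eventually_mem_set.2 (Ioc_mem_nhdsGT one_half_pos)).and
      ((hsmall k _).and (hsmall k _))).exists
  choose t ht htD htC using hexists
  exact ⟨t, ht, htD, fun k x => (mul_le_mul_of_nonneg_left (hC k x) (ht k).1.le).trans (htC k)⟩

lemma exists_hasBottomTrace_totalVar_le (hh : IntegrableOn h (Ioo 0 1)) (hε : 0 < ε) :
    ∃ w, IsBVOn unitSquare w ∧ HasBottomTrace w h ∧
      totalVar unitSquare w ≤ (∫ x in Ioo (0 : ℝ) 1, |h x|) + ε := by
  obtain ⟨g, hg, hgsum, hgle, hgh⟩ := exists_isTestFunction_tsum_eq hh (half_pos hε)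
  have ha := summable_geometric_two' (ε / 2)
  obtain ⟨t, ht, htD, htS⟩ := exists_heights hg
    (a := fun k => ε / 2 / 2 / 2 ^ k) fun k => by positivity
  have ht' : ∀ k, t k ∈ Icc (0 : ℝ) 1 := fun k =>
    ⟨(ht k).1.le, (ht k).2.trans one_half_lt_one.le⟩
  have hlayers := summable_integral_abs_layer ht' hgsum
  have hcost : ∀ k, (∫ x in Ioo (0 : ℝ) 1, |g k x|) + ε / 2 / 2 / 2 ^ k
      ∈ upperBounds (varSet unitSquare (layer (g k) (t k))) := fun k =>
    upperBounds_mono_mem (by gcongr; exact htD k) (mem_upperBounds_varSet_layer (hg k) (ht' k))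
  have hvar := tsum_mem_upperBounds_varSet (fun k => integrableOn_layer (hg k) (t k)) hlayers
    (hgsum.add ha) hcost
  rw [hgsum.tsum_add ha, tsum_geometric_two'] at hvar
  refine ⟨fun z => ∑' k, layer (g k) (t k) z, ⟨integrable_tsum_of_summable_integral_norm
    (fun k => integrableOn_layer (hg k) (t k)) hlayers, _, hvar⟩, ⟨?_, ?_, ?_, ?_⟩, ?_⟩
  · exact tendsto_integral_abs_tsum_layer_sub hg hgsum hgh fun k => (ht k).1
  · exact tendsto_integral_abs_tsum_layer_top g fun k => (ht k).2
  · exact tendsto_integral_abs_tsum_layer_side nhdsWithin_le_nhds left_notMem_Ioo hg ht' ha htS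
  · exact tendsto_integral_abs_tsum_layer_side nhdsWithin_le_nhds right_notMem_Ioo hg ht' ha htS
  · exact (csSup_le ⟨0, zero_mem_varSet _ _⟩ hvar).trans (by linarith)

end Competitors

lemma not_indicator_one_ae_eq_zero {M : Set ℝ} (hM : MeasurableSet M) (hM1 : M ⊆ Icc 0 1)
    (hMpos : 0 < volume M) :
    ¬ M.indicator (1 : ℝ → ℝ) =ᵐ[volume.restrict (Ioo 0 1)] 0 := by
  intro hzero
  rw [restrict_Ioo_eq_restrict_Icc, indicator_ae_eq_zero, Pi.one_def,
    Function.support_const one_ne_zero, inter_univ, Measure.restrict_apply hM,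
    inter_eq_left.2 hM1] at hzero
  exact hMpos.ne' hzero

theorem stmt4_general (h : ℝ → ℝ) (hh : IntegrableOn h (Ioo 0 1))
    (hne : ¬ h =ᵐ[volume.restrict (Ioo 0 1)] 0) :
    ¬ ∃ u₀ : ℝ × ℝ → ℝ, IsBVOn unitSquare u₀ ∧ HasBottomTrace u₀ h ∧
      ∀ w : ℝ × ℝ → ℝ, IsBVOn unitSquare w → HasBottomTrace w h →
        totalVar unitSquare u₀ ≤ totalVar unitSquare w := by
  rintro ⟨u₀, hu, htr, hmin⟩
  have hpos : 0 < ∫ x in Ioo (0 : ℝ) 1, |h x| :=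
    (integral_nonneg fun x => abs_nonneg (h x)).lt_of_ne' fun hzero =>
      hne (by simpa [Filter.EventuallyEq] using
        (integral_eq_zero_iff_of_nonneg (fun x => abs_nonneg (h x)) hh.abs).1 hzero)
  refine (htr.integral_abs_lt_totalVar hu hh hpos).not_ge
    (le_of_forall_pos_le_add fun ε hε => ?_)
  obtain ⟨w, hw, hwtr, hwle⟩ := exists_hasBottomTrace_totalVar_le hh hε
  exact (hmin w hw hwtr).trans hwle

/-- for any measurable `M̃ ⊆ [0,1]` of positive Lebesgue measure, the
least gradient problem on `Q = (0,1)²` with boundary datum `1_{M̃ × {0}}` admits no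
minimizer: there is no BV function with this trace whose total variation is least. -/
theorem stmt4 (M : Set ℝ) (hM : MeasurableSet M) (hM1 : M ⊆ Icc 0 1)
    (hMpos : 0 < volume M) :
    ¬ ∃ u₀ : ℝ × ℝ → ℝ, IsBVOn unitSquare u₀ ∧ HasSquareTraceIndicator u₀ M ∧
      ∀ w : ℝ × ℝ → ℝ, IsBVOn unitSquare w → HasSquareTraceIndicator w M →
        totalVar unitSquare u₀ ≤ totalVar unitSquare w := by
  exact stmt4_general _ (integrableOn_indicator_one hM 0 1)
    (not_indicator_one_ae_eq_zero hM hM1 hMpos)
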